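/- arXiv:0902.0132 — 2 statements merged into one kernel-verified Lean document; each statement's English description precedes it below -/
import Mathlib

section
/- For every integer k ≥ 2 and every finite simple graph G, there is a finite simple graph H with k nodes such that δ_□(G, H) ≤ 10/√(log₂ k). -/
open MeasureTheory Set Filter

/-- The Lebesgue measure restricted to `[0,1]`. -/
noncomputable abbrev μ01 : MeasureTheory.Measure ℝ :=
  MeasureTheory.volume.restrict (Set.Icc (0:ℝ) 1)

/-- A graphon: a symmetric measurable function `[0,1]² → [0,1]`
(defined on all of `ℝ²` for convenience). -/
def IsGraphon (W : ℝ → ℝ → ℝ) : Prop :=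
  Measurable (Function.uncurry W) ∧ (∀ x y, W x y = W y x) ∧ ∀ x y, W x y ∈ Set.Icc (0:ℝ) 1

-- The homomorphism density `t(F,W)` of a finite simple graph `F` in a graphon `W`.
open scoped Classical in
noncomputable def homDensity {n : ℕ} (F : SimpleGraph (Fin n)) (W : ℝ → ℝ → ℝ) : ℝ :=
  ∫ x : Fin n → ℝ,
    (∏ p ∈ Finset.univ.filter (fun p : Fin n × Fin n => p.1 < p.2 ∧ F.Adj p.1 p.2),
      W (x p.1) (x p.2)) ∂(MeasureTheory.Measure.pi fun _ => μ01)

/-- The cut norm `‖U‖_□` of a kernel `U`. -/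
noncomputable def cutNorm (U : ℝ → ℝ → ℝ) : ℝ :=
  sSup { r : ℝ | ∃ S T : Set ℝ, MeasurableSet S ∧ MeasurableSet T ∧
    S ⊆ Set.Icc (0:ℝ) 1 ∧ T ⊆ Set.Icc (0:ℝ) 1 ∧
    r = |∫ x in S, ∫ y in T, U x y| }

/-- An invertible measure preserving map of `[0,1]` onto itself. -/
def IsInvMeasurePreserving (φ : ℝ → ℝ) : Prop :=
  Set.MapsTo φ (Set.Icc (0:ℝ) 1) (Set.Icc (0:ℝ) 1) ∧
  MeasureTheory.MeasurePreserving φ μ01 μ01 ∧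
  ∃ ψ : ℝ → ℝ, Set.MapsTo ψ (Set.Icc (0:ℝ) 1) (Set.Icc (0:ℝ) 1) ∧
    MeasureTheory.MeasurePreserving ψ μ01 μ01 ∧
    (∀ x ∈ Set.Icc (0:ℝ) 1, ψ (φ x) = x) ∧ (∀ x ∈ Set.Icc (0:ℝ) 1, φ (ψ x) = x)

/-- The cut distance `δ_□(U,W)` between two graphons. -/
noncomputable def cutDist (U W : ℝ → ℝ → ℝ) : ℝ :=
  sInf { r : ℝ | ∃ φ : ℝ → ℝ, IsInvMeasurePreserving φ ∧
    r = cutNorm (fun x y => U x y - W (φ x) (φ y)) }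

-- The step-function graphon `W_G` associated with a finite simple graph `G` on `{0,…,n−1}`,
-- using the intervals `J_i = [i/n, (i+1)/n)`.
open scoped Classical in
noncomputable def graphonOf {n : ℕ} (G : SimpleGraph (Fin n)) : ℝ → ℝ → ℝ :=
  fun x y =>
    if ∃ i j : Fin n, G.Adj i j ∧
        x ∈ Set.Ico (((i : ℕ) : ℝ) / n) ((((i : ℕ) : ℝ) + 1) / n) ∧
        y ∈ Set.Ico (((j : ℕ) : ℝ) / n) ((((j : ℕ) : ℝ) + 1) / n)
    then 1 else 0

-- The homomorphism density `t(F,G) = hom(F,G)/|V(G)|^{|V(F)|}` for finite simple graphs.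
open scoped Classical in
noncomputable def homDensityFin {m n : ℕ} (F : SimpleGraph (Fin m)) (G : SimpleGraph (Fin n)) : ℝ :=
  (Fintype.card { f : Fin m → Fin n // ∀ i j, F.Adj i j → G.Adj (f i) (f j) } : ℝ) / (n : ℝ) ^ m

lemma lin_ext {ι : Type*} [Fintype ι] (c a : ι → ℝ) (B α : ℝ)
    (hB : ∀ S : Finset ι, |∑ i ∈ S, c i| ≤ B) (ha : ∀ i, 0 ≤ a i ∧ a i ≤ α) (hα : 0 ≤ α) :
    |∑ i, a i * c i| ≤ α * B := by
  classical
  have key : ∀ c : ι → ℝ, (∀ S : Finset ι, |∑ i ∈ S, c i| ≤ B) → ∑ i, a i * c i ≤ α * B := by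
    intro c hB
    have h1 : ∑ i, a i * c i ≤ ∑ i, (if 0 ≤ c i then α * c i else 0) := by
      apply Finset.sum_le_sum
      intro i _
      split_ifs with h
      · exact mul_le_mul_of_nonneg_right (ha i).2 h
      · nlinarith [(ha i).1]
    rw [← Finset.sum_filter, ← Finset.mul_sum] at h1
    exact h1.trans (mul_le_mul_of_nonneg_left ((le_abs_self _).trans (hB _)) hα)
  rw [abs_le]
  constructor
  · have := key (fun i => - c i) (by intro S; simpa using hB S)
    simp only [mul_neg, Finset.sum_neg_distrib] at this
    linarith
  · exact key c hB

lemma bil_ext {ι κ : Type*} [Fintype ι] [Fintype κ] (M : ι → κ → ℝ) (a : ι → ℝ) (b : κ → ℝ)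
    (B α β : ℝ) (hB : ∀ (S : Finset ι) (T : Finset κ), |∑ i ∈ S, ∑ j ∈ T, M i j| ≤ B)
    (ha : ∀ i, 0 ≤ a i ∧ a i ≤ α) (hα : 0 ≤ α) (hb : ∀ i, 0 ≤ b i ∧ b i ≤ β) (hβ : 0 ≤ β) :
    |∑ i, a i * ∑ j, b j * M i j| ≤ α * (β * B) := by
  apply lin_ext _ _ _ _ _ ha hα
  intro S
  have := lin_ext (fun j => ∑ i ∈ S, M i j) b B β
    (by intro T; rw [Finset.sum_comm]; exact hB S T) hb hβ
  rw [Finset.sum_comm]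
  simpa [Finset.mul_sum] using this

/-- one-step inequality -/
lemma step_exp (p y : ℝ) (hp : 0 ≤ p) (hp1 : p ≤ 1) (hy : |y| ≤ 1) :
    p * Real.exp (y * (1 - p)) + (1 - p) * Real.exp (y * (0 - p)) ≤ Real.exp (y ^ 2) := by
  have hyb := abs_le.1 hy
  have h1 : |y * (1 - p)| ≤ 1 := by
    rw [abs_mul]
    exact mul_le_one₀ hy (abs_nonneg _) (by rw [abs_le]; constructor <;> linarith)
  have h2 : |y * (0 - p)| ≤ 1 := by
    rw [abs_mul]
    exact mul_le_one₀ hy (abs_nonneg _) (by rw [abs_le]; constructor <;> linarith)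
  have e1 := (abs_le.1 (Real.abs_exp_sub_one_sub_id_le h1)).2
  have e2 := (abs_le.1 (Real.abs_exp_sub_one_sub_id_le h2)).2
  have e3 := Real.add_one_le_exp (y ^ 2)
  have f1 : Real.exp (y * (1 - p)) ≤ 1 + y * (1 - p) + (y * (1 - p)) ^ 2 := by linarith
  have f2 : Real.exp (y * (0 - p)) ≤ 1 + y * (0 - p) + (y * (0 - p)) ^ 2 := by linarith
  have g1 := mul_le_mul_of_nonneg_left f1 hp
  have g2 := mul_le_mul_of_nonneg_left f2 (sub_nonneg.2 hp1)
  have g3 : p * (1 - p) ≤ 1 := by nlinarith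
  have g4 := mul_le_mul_of_nonneg_right g3 (sq_nonneg y)
  nlinarith

lemma rounding_pot {E τ : Type*} [Fintype τ] (F : Finset E) (a : τ → E → ℝ) (p : E → ℝ)
    (l : ℝ) (hl : 0 ≤ l) (hl2 : l * 2 ≤ 1) (ha : ∀ t e, |a t e| ≤ 2)
    (hp : ∀ e, 0 ≤ p e ∧ p e ≤ 1) :
    ∃ x : E → ℝ, (∀ e, x e = 0 ∨ x e = 1) ∧
      ∑ t, Real.exp (l * ∑ e ∈ F, a t e * (x e - p e)) ≤
        Fintype.card τ * Real.exp (4 * l ^ 2 * F.card) := by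
  classical
  induction F using Finset.induction_on with
  | empty => exact ⟨fun _ => 0, by simp, by simp⟩
  | insert e F he ih =>
    obtain ⟨x, hx, hs⟩ := ih
    set w : τ → ℝ := fun t => Real.exp (l * ∑ e ∈ F, a t e * (x e - p e)) with hw
    have hupd : ∀ v : ℝ, ∀ t, Real.exp (l * ∑ e' ∈ insert e F,
        a t e' * (Function.update x e v e' - p e')) =
        w t * Real.exp (l * a t e * (v - p e)) := by
      intro v t
      rw [Finset.sum_insert he, hw, ← Real.exp_add]
      congr 1
      have : ∑ e' ∈ F, a t e' * (Function.update x e v e' - p e')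
          = ∑ e' ∈ F, a t e' * (x e' - p e') := by
        apply Finset.sum_congr rfl
        intro e' he'
        rw [Function.update_of_ne]
        rintro rfl; exact he he'
      rw [this, Function.update_self]
      ring
    have hstep : ∀ t, p e * (w t * Real.exp (l * a t e * (1 - p e))) +
        (1 - p e) * (w t * Real.exp (l * a t e * (0 - p e))) ≤ w t * Real.exp (4 * l ^ 2) := by
      intro t
      have hle : |l * a t e| ≤ 2 * l := by
        rw [abs_mul, abs_of_nonneg hl]; nlinarith [ha t e]
      have h1 := step_exp (p e) (l * a t e) (hp e).1 (hp e).2 (by linarith)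
      have h2 : Real.exp ((l * a t e) ^ 2) ≤ Real.exp (4 * l ^ 2) := by
        apply Real.exp_le_exp.2
        have := sq_le_sq' (by linarith [(abs_le.1 hle).1]) (abs_le.1 hle).2
        nlinarith
      have hwpos : 0 ≤ w t := (Real.exp_pos _).le
      have := mul_le_mul_of_nonneg_left (h1.trans h2) hwpos
      nlinarith
    have hsum := Finset.sum_le_sum (fun t (_ : t ∈ Finset.univ) => hstep t)
    rw [Finset.sum_add_distrib, ← Finset.mul_sum, ← Finset.mul_sum, ← Finset.sum_mul] at hsum
    have hfin : (∑ t, w t) * Real.exp (4 * l ^ 2) ≤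
        Fintype.card τ * Real.exp (4 * l ^ 2 * (insert e F).card) := by
      rw [Finset.card_insert_of_notMem he]
      push_cast
      rw [mul_add, mul_one, Real.exp_add, ← mul_assoc]
      exact mul_le_mul_of_nonneg_right hs (Real.exp_pos _).le
    have hor : (∑ t, w t * Real.exp (l * a t e * (1 - p e)) ≤ (∑ t, w t) * Real.exp (4 * l ^ 2)) ∨
      (∑ t, w t * Real.exp (l * a t e * (0 - p e)) ≤ (∑ t, w t) * Real.exp (4 * l ^ 2)) := by
      by_contra! hcon
      obtain ⟨c1, c2⟩ := hcon
      rcases (hp e).1.eq_or_lt with h0 | h0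
      · rw [← h0] at hsum c1 c2; linarith
      · have d1 := mul_lt_mul_of_pos_left c1 h0
        have d2 := mul_le_mul_of_nonneg_left c2.le (sub_nonneg.2 (hp e).2)
        linarith
    rcases hor with h | h
    · refine ⟨Function.update x e 1, ?_, ?_⟩
      · intro e'
        by_cases h' : e' = e
        · subst h'; simp
        · simp [h', hx]
      · simp_rw [hupd]; exact h.trans hfin
    · refine ⟨Function.update x e 0, ?_, ?_⟩
      · intro e'
        by_cases h' : e' = e
        · subst h'; simp
        · simp [h', hx]
      · simp_rw [hupd]; exact h.trans hfin

open scoped Classical in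
/-- adjacency indicator -/
noncomputable def adjR {k : ℕ} (H : SimpleGraph (Fin k)) (i j : Fin k) : ℝ :=
  if H.Adj i j then 1 else 0

lemma sum_split {k : ℕ} (f : Fin k → Fin k → ℝ) :
    ∑ i, ∑ j, f i j = (∑ e ∈ (Finset.univ : Finset (Fin k × Fin k)).filter (fun e => e.1 < e.2),
      (f e.1 e.2 + f e.2 e.1)) + ∑ i, f i i := by
  rw [Finset.sum_add_distrib, Finset.sum_filter, Finset.sum_filter, Fintype.sum_prod_type,
    Fintype.sum_prod_type, Finset.sum_comm (f := fun x y => if x < y then f y x else 0),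
    ← Finset.sum_add_distrib, ← Finset.sum_add_distrib]
  apply Finset.sum_congr rfl
  intro i _
  have : f i i = ∑ j, if i = j then f i j else 0 := by simp
  rw [this, ← Finset.sum_add_distrib, ← Finset.sum_add_distrib]
  apply Finset.sum_congr rfl
  intro j _
  rcases lt_trichotomy i j with h | h | h
  · simp [h, h.ne, h.not_gt]
  · simp [h]
  · simp [h, h.ne', h.not_gt]

lemma rounding {k : ℕ} (hk : 4 ≤ k) (p : Fin k → Fin k → ℝ) (hsym : ∀ i j, p i j = p j i)
    (hp : ∀ i j, 0 ≤ p i j ∧ p i j ≤ 1) :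
    ∃ H : SimpleGraph (Fin k), ∀ S T : Finset (Fin k),
      |∑ i ∈ S, ∑ j ∈ T, (adjR H i j - p i j)| ≤ 8 * (k * √k) := by
  classical
  set F := (Finset.univ : Finset (Fin k × Fin k)).filter (fun e => e.1 < e.2) with hF
  let ind : Finset (Fin k) → Fin k → ℝ := fun S i => if i ∈ S then 1 else 0
  have hind : ∀ S i, ind S i = 0 ∨ ind S i = 1 := by
    intro S i; by_cases h : i ∈ S <;> simp [ind, h]
  let sg : Bool → ℝ := fun b => if b then 1 else -1
  let a : (Bool × Finset (Fin k) × Finset (Fin k)) → (Fin k × Fin k) → ℝ := fun t e =>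
    sg t.1 * (ind t.2.1 e.1 * ind t.2.2 e.2 + ind t.2.1 e.2 * ind t.2.2 e.1)
  have ha : ∀ t e, |a t e| ≤ 2 := by
    rintro ⟨b, S, T⟩ ⟨i, j⟩
    simp only [a]
    rcases hind S i with h1 | h1 <;> rcases hind S j with h2 | h2 <;>
    rcases hind T i with h3 | h3 <;> rcases hind T j with h4 | h4 <;>
    rw [h1, h2, h3, h4] <;> cases b <;> simp [sg] <;> norm_num
  have hk0 : (4 : ℝ) ≤ k := by exact_mod_cast hk
  have hs2 : 2 ≤ √(k : ℝ) := by
    apply Real.le_sqrt_of_sq_le; norm_num; exact hk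
  have hss : √(k : ℝ) * √k = k := Real.mul_self_sqrt (by linarith)
  set s := √(k : ℝ) with hs
  have hspos : 0 < s := by linarith
  obtain ⟨x, hx, hpot⟩ := rounding_pot F a (fun e => p e.1 e.2) (1 / s) (by positivity)
    (by rw [div_mul_eq_mul_div, div_le_one hspos]; linarith) ha (fun e => hp _ _)
  let H : SimpleGraph (Fin k) :=
    { Adj := fun i j => (i < j ∧ x (i, j) = 1) ∨ (j < i ∧ x (j, i) = 1)
      symm := ⟨fun i j h => h.symm⟩
      loopless := ⟨fun i h => by simp at h⟩ }
  refine ⟨H, fun S T => ?_⟩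
  have hH1 : ∀ i j, i < j → adjR H i j = x (i, j) := by
    intro i j hij
    rcases hx (i, j) with h | h <;> simp [adjR, H, hij, hij.not_gt, h]
  have hH2 : ∀ i j, i < j → adjR H j i = x (i, j) := by
    intro i j hij
    rcases hx (i, j) with h | h <;> simp [adjR, H, hij, hij.not_gt, h]
  have hH3 : ∀ i, adjR H i i = 0 := by
    intro i; simp [adjR]
  have hsum : ∑ i ∈ S, ∑ j ∈ T, (adjR H i j - p i j) =
      ∑ i, ∑ j, ind S i * ind T j * (adjR H i j - p i j) := by
    simp only [ind, ite_mul, one_mul, zero_mul]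
    simp [Finset.sum_ite_mem]
  rw [hsum, sum_split]
  have hoff : ∀ b : Bool, ∑ e ∈ F, (ind S e.1 * ind T e.2 * (adjR H e.1 e.2 - p e.1 e.2) +
      ind S e.2 * ind T e.1 * (adjR H e.2 e.1 - p e.2 e.1)) * sg b =
      ∑ e ∈ F, a (b, S, T) e * (x e - p e.1 e.2) := by
    intro b
    apply Finset.sum_congr rfl
    rintro ⟨i, j⟩ he
    simp only [hF, Finset.mem_filter, Finset.mem_univ, true_and] at he
    simp only [a]
    rw [hH1 i j he, hH2 i j he, hsym j i]
    ring
  have hlog : ∀ b : Bool, ∑ e ∈ F, a (b, S, T) e * (x e - p e.1 e.2) ≤ 7 * (k * s) := by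
    intro b
    have h1 := (Finset.single_le_sum (f := fun t => Real.exp (1 / s * ∑ e ∈ F, a t e * (x e - p e.1 e.2)))
      (fun t _ => (Real.exp_pos _).le) (Finset.mem_univ (b, S, T))).trans hpot
    have hc : (Fintype.card (Bool × Finset (Fin k) × Finset (Fin k)) : ℝ) ≤ Real.exp (3 * k) := by
      have h2 : (2 : ℝ) ≤ Real.exp 1 := by linarith [Real.add_one_le_exp 1]
      have : (Fintype.card (Bool × Finset (Fin k) × Finset (Fin k)) : ℝ) = 2 ^ (1 + k + k) := by
        simp [pow_add]; ring
      rw [this]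
      calc (2 : ℝ) ^ (1 + k + k) ≤ Real.exp 1 ^ (1 + k + k) := by gcongr
        _ = Real.exp (1 + k + k) := by rw [← Real.exp_nat_mul]; push_cast; ring_nf
        _ ≤ _ := by apply Real.exp_le_exp.2; linarith
    have hFc : (F.card : ℝ) ≤ k * k := by
      have : F.card ≤ k * k := by
        refine (Finset.card_le_univ F).trans ?_
        simp
      exact_mod_cast this
    have hE : 4 * (1 / s) ^ 2 * (F.card : ℝ) ≤ 4 * k := by
      have : (1 / s) ^ 2 = 1 / k := by rw [div_pow, one_pow, sq, hss]
      rw [this]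
      have : 4 * (1 / (k:ℝ)) * F.card ≤ 4 * (1 / k) * (k * k) := by gcongr
      refine this.trans (le_of_eq ?_)
      field_simp
    have h3 : Real.exp (1 / s * ∑ e ∈ F, a (b, S, T) e * (x e - p e.1 e.2)) ≤
        Real.exp (3 * k + 4 * k) := by
      rw [Real.exp_add]
      refine h1.trans ?_
      gcongr
    have h4 := Real.exp_le_exp.1 h3
    rw [div_mul_eq_mul_div, div_le_iff₀ hspos] at h4
    linarith
  have hd : |∑ i, ind S i * ind T i * (adjR H i i - p i i)| ≤ k := by
    refine (Finset.abs_sum_le_sum_abs _ _).trans ?_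
    have : ∀ i ∈ (Finset.univ : Finset (Fin k)), |ind S i * ind T i * (adjR H i i - p i i)| ≤ 1 := by
      intro i _
      rw [hH3]
      have := hp i i
      rcases hind S i with h1 | h1 <;> rcases hind T i with h2 | h2 <;> rw [h1, h2] <;> simp
      rw [abs_le]; constructor <;> linarith
    refine (Finset.sum_le_card_nsmul _ _ _ this).trans ?_
    simp
  have hks : (k : ℝ) ≤ k * s := by nlinarith
  have e1 := (hoff true).trans_le (hlog true)
  have e2 := (hoff false).trans_le (hlog false)
  rw [← Finset.sum_mul] at e1 e2
  simp only [sg, if_true] at e1 e2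
  have hd' := abs_le.1 hd
  rw [abs_le]
  simp at e2
  constructor <;> linarith

open scoped Classical in
/-- cell averages -/
noncomputable def avg {V : Type*} [Fintype V] (W : V → V → ℝ) (f : V → ℕ) (a b : ℕ) : ℝ :=
  (∑ x with f x = a, ∑ y with f y = b, W x y) /
    (((Finset.univ.filter (fun x => f x = a)).card : ℝ) *
      ((Finset.univ.filter (fun x => f x = b)).card : ℝ))

lemma avg_symm {V : Type*} [Fintype V] (W : V → V → ℝ) (hW : ∀ x y, W x y = W y x) (f : V → ℕ)
    (a b : ℕ) : avg W f a b = avg W f b a := by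
  classical
  unfold avg
  rw [Finset.sum_comm, mul_comm]
  simp_rw [fun x y => hW y x]

lemma avg_mem {V : Type*} [Fintype V] (W : V → V → ℝ) (hW : ∀ x y, 0 ≤ W x y ∧ W x y ≤ 1)
    (f : V → ℕ) (a b : ℕ) : 0 ≤ avg W f a b ∧ avg W f a b ≤ 1 := by
  classical
  unfold avg
  constructor
  · exact div_nonneg (Finset.sum_nonneg fun x _ => Finset.sum_nonneg fun y _ => (hW x y).1)
      (by positivity)
  · apply div_le_one_of_le₀ _ (by positivity)
    calc _ ≤ ∑ x with f x = a, ∑ y with f y = b, (1 : ℝ) :=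
          Finset.sum_le_sum fun x _ => Finset.sum_le_sum fun y _ => (hW x y).2
      _ = _ := by simp

lemma var_min {ι : Type*} (s : Finset ι) (w : ι → ℝ) (c : ℝ) :
    ∑ i ∈ s, (w i - (∑ i ∈ s, w i) / s.card) ^ 2 ≤ ∑ i ∈ s, (w i - c) ^ 2 := by
  rcases s.eq_empty_or_nonempty with rfl | hs
  · simp
  have hc : (0 : ℝ) < s.card := by exact_mod_cast hs.card_pos
  set m := (∑ i ∈ s, w i) / s.card with hm
  have hsum : ∑ i ∈ s, w i = s.card * m := by rw [hm, mul_div_cancel₀ _ hc.ne']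
  have : ∑ i ∈ s, (w i - c) ^ 2 = ∑ i ∈ s, (w i - m) ^ 2 + s.card * (m - c) ^ 2 := by
    have : ∀ i, (w i - c) ^ 2 = (w i - m) ^ 2 + (2 * (m - c) * w i + (c ^ 2 - m ^ 2)) := by
      intro i; ring
    rw [Finset.sum_congr rfl (fun i _ => this i), Finset.sum_add_distrib, Finset.sum_add_distrib, ← Finset.mul_sum, hsum]
    simp
    ring
  rw [this]
  have : 0 ≤ s.card * (m - c) ^ 2 := mul_nonneg hc.le (sq_nonneg _)
  linarith

/-- averages minimise the L2 distance -/
lemma avg_min {V : Type*} [Fintype V] (W : V → V → ℝ) (f : V → ℕ) (c : ℕ → ℕ → ℝ) :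
    ∑ z : V × V, (W z.1 z.2 - avg W f (f z.1) (f z.2)) ^ 2 ≤
      ∑ z : V × V, (W z.1 z.2 - c (f z.1) (f z.2)) ^ 2 := by
  classical
  set I : Finset (ℕ × ℕ) := Finset.univ.image (fun z : V × V => (f z.1, f z.2)) with hI
  have hmaps : ∀ z ∈ (Finset.univ : Finset (V × V)), (f z.1, f z.2) ∈ I := by
    intro z _; simp only [hI]; exact Finset.mem_image_of_mem _ (Finset.mem_univ z)
  rw [← Finset.sum_fiberwise_of_maps_to hmaps, ← Finset.sum_fiberwise_of_maps_to hmaps]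
  apply Finset.sum_le_sum
  rintro ⟨a, b⟩ _
  have h := var_min (Finset.univ.filter (fun z : V × V => (f z.1, f z.2) = (a, b)))
    (fun z => W z.1 z.2) (c a b)
  have hset : Finset.univ.filter (fun z : V × V => (f z.1, f z.2) = (a, b)) =
      (Finset.univ.filter (fun x => f x = a)) ×ˢ (Finset.univ.filter (fun x => f x = b)) := by
    ext ⟨x, y⟩; simp
  have havg : (∑ z : V × V with (f z.1, f z.2) = (a, b), W z.1 z.2) /
      ((Finset.univ.filter (fun z : V × V => (f z.1, f z.2) = (a, b))).card : ℝ) = avg W f a b := by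
    rw [hset, Finset.sum_product, Finset.card_product]
    unfold avg
    push_cast
    congr!
  rw [havg] at h
  calc _ = _ := ?_
    _ ≤ _ := h
    _ = _ := ?_
  · apply Finset.sum_congr rfl
    intro z hz
    simp at hz
    rw [hz.1, hz.2]
  · apply Finset.sum_congr rfl
    intro z hz
    simp at hz
    rw [hz.1, hz.2]

lemma weak_reg {V : Type*} [Fintype V] [Nonempty V] (W : V → V → ℝ)
    (hW : ∀ x y, 0 ≤ W x y ∧ W x y ≤ 1) (t : ℕ) (ht : 1 ≤ t) :
    ∃ f : V → ℕ, (∀ x, f x < 4 ^ t) ∧ ∀ S T : Finset V,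
      |∑ x ∈ S, ∑ y ∈ T, (W x y - avg W f (f x) (f y))| ≤ (Fintype.card V : ℝ) ^ 2 / √t := by
  classical
  by_contra! hcon
  set N : ℝ := ((Fintype.card V : ℕ) : ℝ) with hN
  have hNpos : 0 < N := by rw [hN]; exact_mod_cast Fintype.card_pos
  have ht0 : (0 : ℝ) < t := by exact_mod_cast ht
  have key : ∀ i : ℕ, i ≤ t → ∃ f : V → ℕ, (∀ x, f x < 4 ^ i) ∧
      ∑ z : V × V, (W z.1 z.2 - avg W f (f z.1) (f z.2)) ^ 2 ≤ N ^ 2 * (1 - i / t) ∧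
      (1 ≤ i → ∑ z : V × V, (W z.1 z.2 - avg W f (f z.1) (f z.2)) ^ 2 < N ^ 2 * (1 - i / t)) := by
    intro i
    induction i with
    | zero =>
      intro _
      refine ⟨fun _ => 0, by simp, ?_, by simp⟩
      have : ∀ z ∈ (Finset.univ : Finset (V × V)), (W z.1 z.2 - avg W (fun _ => 0) 0 0) ^ 2 ≤ 1 := by
        intro z _
        have h1 := hW z.1 z.2
        have h2 := avg_mem W hW (fun _ => 0) 0 0
        rw [sq_le_one_iff_abs_le_one, abs_le]
        constructor <;> linarith
      refine (Finset.sum_le_card_nsmul _ _ _ this).trans ?_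
      simp [hN, sq]
    | succ i ih =>
      intro hi
      obtain ⟨f, hf, he, -⟩ := ih (by omega)
      obtain ⟨S, T, hST⟩ := hcon f
        (fun x => (hf x).trans_le (Nat.pow_le_pow_right (by norm_num) (by omega)))
      let f' : V → ℕ := fun x => 4 * f x + (2 * (if x ∈ S then 1 else 0) + (if x ∈ T then 1 else 0))
      have hlt : ∀ x, (2 * (if x ∈ S then 1 else 0) + (if x ∈ T then 1 else 0)) < 4 := by
        intro x; split_ifs <;> norm_num
      set D := ∑ x ∈ S, ∑ y ∈ T, (W x y - avg W f (f x) (f y)) with hD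
      set δ := D / N ^ 2 with hδ
      let c : ℕ → ℕ → ℝ := fun a b => avg W f (a / 4) (b / 4) +
        (if a % 4 / 2 = 1 ∧ b % 2 = 1 then δ else 0)
      have hf4 : ∀ x, f' x / 4 = f x := by
        intro x; have := hlt x; simp only [f']; omega
      have hfS : ∀ x, f' x % 4 / 2 = 1 ↔ x ∈ S := by
        intro x; simp only [f']; split_ifs <;> simp [*] <;> omega
      have hfT : ∀ x, f' x % 2 = 1 ↔ x ∈ T := by
        intro x; simp only [f']; split_ifs <;> simp [*] <;> omega
      have hc : ∀ z : V × V, c (f' z.1) (f' z.2) = avg W f (f z.1) (f z.2) +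
          (if z ∈ S ×ˢ T then δ else 0) := by
        intro z
        simp only [c, hf4, hfS, hfT, Finset.mem_product]
      have hmin := avg_min W f' c
      have hexp : ∑ z : V × V, (W z.1 z.2 - c (f' z.1) (f' z.2)) ^ 2 =
          ∑ z : V × V, (W z.1 z.2 - avg W f (f z.1) (f z.2)) ^ 2 +
            (- 2 * δ * D + δ ^ 2 * (S.card * T.card)) := by
        have h1 : ∀ z : V × V, (W z.1 z.2 - c (f' z.1) (f' z.2)) ^ 2 =
            (W z.1 z.2 - avg W f (f z.1) (f z.2)) ^ 2 +
            (if z ∈ S ×ˢ T then (-2 * δ * (W z.1 z.2 - avg W f (f z.1) (f z.2)) + δ ^ 2) else 0) := by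
          intro z
          rw [hc]
          split_ifs <;> ring
        simp_rw [h1]
        rw [Finset.sum_add_distrib, Finset.sum_ite_mem, Finset.univ_inter, Finset.sum_add_distrib,
          ← Finset.mul_sum, Finset.sum_product]
        simp only [Finset.sum_const, Finset.card_product, nsmul_eq_mul]
        push_cast
        rw [← hD]; ring
      have hcard : (S.card : ℝ) * T.card ≤ N ^ 2 := by
        rw [sq]
        have h1 : (S.card : ℝ) ≤ N := by rw [hN]; exact_mod_cast Finset.card_le_univ S
        have h2 : (T.card : ℝ) ≤ N := by rw [hN]; exact_mod_cast Finset.card_le_univ T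
        gcongr
      have hDδ : D = δ * N ^ 2 := by rw [hδ]; field_simp
      have hδ2 : 1 / t < δ ^ 2 := by
        have h1 : 1 / √(t : ℝ) < |δ| := by
          rw [hδ, abs_div, abs_of_pos (by positivity : (0:ℝ) < N ^ 2), lt_div_iff₀ (by positivity)]
          calc _ = N ^ 2 / √t := by ring
            _ < _ := hST
        have h2 := pow_lt_pow_left₀ h1 (by positivity) (two_ne_zero)
        rwa [div_pow, one_pow, Real.sq_sqrt ht0.le, sq_abs] at h2
      have hmain : ∑ z : V × V, (W z.1 z.2 - avg W f' (f' z.1) (f' z.2)) ^ 2 <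
          N ^ 2 * (1 - (i + 1 : ℕ) / t) := by
        refine hmin.trans_lt ?_
        rw [hexp, hDδ]
        have h1 := mul_le_mul_of_nonneg_left hcard (sq_nonneg δ)
        have h2 : N ^ 2 * (1 / t) < N ^ 2 * δ ^ 2 := by gcongr
        have h3 : N ^ 2 * (1 - (i + 1 : ℕ) / (t : ℝ)) = N ^ 2 * (1 - i / t) - N ^ 2 * (1 / t) := by
          push_cast; ring
        rw [h3]
        nlinarith
      refine ⟨f', ?_, hmain.le, fun _ => hmain⟩
      intro x
      have := hlt x
      have := hf x
      simp only [f', pow_succ]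
      omega
  obtain ⟨f, -, -, h⟩ := key t le_rfl
  have := h ht
  rw [div_self ht0.ne', sub_self, mul_zero] at this
  exact absurd this (not_lt.2 (Finset.sum_nonneg fun _ _ => sq_nonneg _))

/-- adjacency indicator extended to naturals -/
noncomputable def adjN {k : ℕ} (H : SimpleGraph (Fin k)) (a b : ℕ) : ℝ :=
  if h : a < k ∧ b < k then adjR H ⟨a, h.1⟩ ⟨b, h.2⟩ else 0

lemma mem_Ico_floor {n : ℕ} (hn : 0 < n) {x : ℝ} (hx : 0 ≤ x) (i : ℕ) :
    x ∈ Set.Ico ((i : ℝ) / n) (((i : ℝ) + 1) / n) ↔ ⌊(n : ℝ) * x⌋₊ = i := by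
  have hn' : (0 : ℝ) < n := by exact_mod_cast hn
  rw [Nat.floor_eq_iff (by positivity), Set.mem_Ico, div_le_iff₀ hn', lt_div_iff₀ hn', mul_comm x]

lemma graphonOf_eq {n : ℕ} (hn : 0 < n) (G : SimpleGraph (Fin n)) {x y : ℝ} (hx : 0 ≤ x)
    (hy : 0 ≤ y) : graphonOf G x y = adjN G ⌊(n : ℝ) * x⌋₊ ⌊(n : ℝ) * y⌋₊ := by
  classical
  unfold graphonOf adjN adjR
  simp_rw [mem_Ico_floor hn hx, mem_Ico_floor hn hy]
  by_cases h : ⌊(n : ℝ) * x⌋₊ < n ∧ ⌊(n : ℝ) * y⌋₊ < n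
  · rw [dif_pos h]
    congr 1
    apply propext
    constructor
    · rintro ⟨i, j, hij, h1, h2⟩
      simp only [h1, h2]
      exact hij
    · intro hij
      exact ⟨_, _, hij, rfl, rfl⟩
  · rw [dif_neg h, if_neg]
    rintro ⟨i, j, hij, h1, h2⟩
    apply h
    rw [h1, h2]
    exact ⟨i.2, j.2⟩

lemma measurable_floorN (N : ℕ) : Measurable (fun x : ℝ => ⌊(N : ℝ) * x⌋₊) :=
  Nat.measurable_floor.comp (measurable_const_mul _)

lemma step_int {N : ℕ} (hN : 0 < N) (S : Set ℝ) (hS : MeasurableSet S)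
    (hS1 : S ⊆ Set.Icc (0:ℝ) 1) (F : ℕ → ℝ) :
    ∫ x in S, F ⌊(N : ℝ) * x⌋₊ =
      ∑ i : Fin N, volume.real (S ∩ {x | ⌊(N : ℝ) * x⌋₊ = i}) * F i := by
  classical
  have hN' : (0 : ℝ) < N := by exact_mod_cast hN
  have hfin : volume S < ⊤ := (measure_mono hS1).trans_lt (by simp)
  have hm : ∀ i : ℕ, MeasurableSet {x : ℝ | ⌊(N : ℝ) * x⌋₊ = i} := fun i =>
    measurable_floorN N (measurableSet_singleton i)
  have h1 : ∫ x in S, F ⌊(N : ℝ) * x⌋₊ = ∫ x in S, ∑ i : Fin N,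
      ({x : ℝ | ⌊(N : ℝ) * x⌋₊ = i}).indicator (fun _ => F i) x := by
    apply setIntegral_congr_ae hS
    have : ∀ᵐ x : ℝ, x ≠ 1 := by
      rw [ae_iff]; simp
    filter_upwards [this] with x hx1 hxS
    have hx := hS1 hxS
    have hlt : ⌊(N : ℝ) * x⌋₊ < N := by
      rw [Nat.floor_lt (mul_nonneg hN'.le hx.1)]
      have := lt_of_le_of_ne hx.2 hx1
      nlinarith
    rw [Finset.sum_eq_single (⟨_, hlt⟩ : Fin N)]
    · simp
    · intro b _ hb
      rw [Set.indicator_of_notMem]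
      intro h
      apply hb
      ext
      exact h.symm
    · simp
  rw [h1, integral_finsetSum]
  · apply Finset.sum_congr rfl
    intro i _
    rw [setIntegral_indicator (hm i), setIntegral_const, smul_eq_mul]
  · intro i _
    apply Integrable.indicator _ (hm i)
    exact integrableOn_const hfin.ne

lemma vol_cell {N : ℕ} (hN : 0 < N) (S : Set ℝ) (hS1 : S ⊆ Set.Icc (0:ℝ) 1) (i : ℕ) :
    volume.real (S ∩ {x | ⌊(N : ℝ) * x⌋₊ = i}) ≤ 1 / N := by
  have hN' : (0 : ℝ) < N := by exact_mod_cast hN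
  have hsub : S ∩ {x | ⌊(N : ℝ) * x⌋₊ = i} ⊆ Set.Ico ((i : ℝ) / N) (((i : ℝ) + 1) / N) := by
    rintro x ⟨hx, hi⟩
    exact (mem_Ico_floor hN (hS1 hx).1 i).2 hi
  refine (measureReal_mono hsub (by simp)).trans ?_
  rw [Real.volume_real_Ico_of_le]
  · apply le_of_eq; ring
  · gcongr; linarith

lemma cutNorm_le {N : ℕ} (hN : 0 < N) (U : ℝ → ℝ → ℝ) (M : ℕ → ℕ → ℝ) (B : ℝ)
    (hU : ∀ x ∈ Set.Icc (0:ℝ) 1, ∀ y ∈ Set.Icc (0:ℝ) 1,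
      U x y = M ⌊(N : ℝ) * x⌋₊ ⌊(N : ℝ) * y⌋₊)
    (hB : ∀ S T : Finset (Fin N), |∑ i ∈ S, ∑ j ∈ T, M i j| ≤ (N : ℝ) ^ 2 * B) :
    cutNorm U ≤ B := by
  have hN' : (0 : ℝ) < N := by exact_mod_cast hN
  unfold cutNorm
  apply csSup_le
  · exact ⟨_, ∅, ∅, MeasurableSet.empty, MeasurableSet.empty, by simp, by simp, rfl⟩
  rintro r ⟨S, T, hS, hT, hS1, hT1, rfl⟩
  have h1 : ∫ x in S, ∫ y in T, U x y =
      ∫ x in S, (fun a : ℕ => ∑ j : Fin N, volume.real (T ∩ {x | ⌊(N : ℝ) * x⌋₊ = j}) * M a j)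
        ⌊(N : ℝ) * x⌋₊ := by
    apply setIntegral_congr_fun hS
    intro x hx
    simp only
    rw [← step_int hN T hT hT1 (fun b => M ⌊(N : ℝ) * x⌋₊ b)]
    apply setIntegral_congr_fun hT
    intro y hy
    exact hU x (hS1 hx) y (hT1 hy)
  rw [h1, step_int hN S hS hS1 (fun a : ℕ => ∑ j : Fin N, volume.real (T ∩ {x | ⌊(N : ℝ) * x⌋₊ = j}) * M a j)]
  have := bil_ext (fun i j : Fin N => M i j)
    (fun i => volume.real (S ∩ {x | ⌊(N : ℝ) * x⌋₊ = (i : ℕ)}))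
    (fun i => volume.real (T ∩ {x | ⌊(N : ℝ) * x⌋₊ = (i : ℕ)})) ((N : ℝ) ^ 2 * B) (1 / N) (1 / N)
    hB (fun i => ⟨measureReal_nonneg, vol_cell hN S hS1 i⟩) (by positivity)
    (fun i => ⟨measureReal_nonneg, vol_cell hN T hT1 i⟩) (by positivity)
  refine this.trans (le_of_eq ?_)
  field_simp

/-- a permutation of `Fin N` extended to the naturals -/
def extP {N : ℕ} (σ : Equiv.Perm (Fin N)) (i : ℕ) : ℕ := if h : i < N then σ ⟨i, h⟩ else i

lemma extP_inv {N : ℕ} (σ : Equiv.Perm (Fin N)) (i : ℕ) : extP σ.symm (extP σ i) = i := by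
  unfold extP
  by_cases h : i < N
  · simp [h]
  · simp [h]

lemma extP_lt {N : ℕ} (σ : Equiv.Perm (Fin N)) {i : ℕ} (hi : i < N) : extP σ i < N := by
  unfold extP
  rw [dif_pos hi]; exact (σ _).2

/-- interval exchange -/
noncomputable def exch {N : ℕ} (σ : Equiv.Perm (Fin N)) (x : ℝ) : ℝ :=
  x + ((extP σ ⌊(N : ℝ) * x⌋₊ : ℝ) - (⌊(N : ℝ) * x⌋₊ : ℝ)) / N

lemma exch_mul {N : ℕ} (hN : 0 < N) (σ : Equiv.Perm (Fin N)) (x : ℝ) :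
    (N : ℝ) * exch σ x = (N : ℝ) * x - (⌊(N : ℝ) * x⌋₊ : ℝ) + extP σ ⌊(N : ℝ) * x⌋₊ := by
  have hN' : (0 : ℝ) < N := by exact_mod_cast hN
  unfold exch
  field_simp
  ring

lemma exch_floor {N : ℕ} (hN : 0 < N) (σ : Equiv.Perm (Fin N)) {x : ℝ} (hx : 0 ≤ x) :
    ⌊(N : ℝ) * exch σ x⌋₊ = extP σ ⌊(N : ℝ) * x⌋₊ := by
  have h0 : 0 ≤ (N : ℝ) * x := by positivity
  have h1 := Nat.floor_le h0
  have h2 := Nat.lt_floor_add_one ((N : ℝ) * x)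
  rw [exch_mul hN]
  rw [Nat.floor_eq_iff (by
    have : (0 : ℝ) ≤ extP σ ⌊(N : ℝ) * x⌋₊ := by positivity
    linarith)]
  constructor <;> linarith

lemma exch_nonneg {N : ℕ} (hN : 0 < N) (σ : Equiv.Perm (Fin N)) {x : ℝ} (hx : 0 ≤ x) :
    0 ≤ exch σ x := by
  have hN' : (0 : ℝ) < N := by exact_mod_cast hN
  have h1 := Nat.floor_le (show 0 ≤ (N : ℝ) * x by positivity)
  have h2 := exch_mul hN σ x
  have : (0 : ℝ) ≤ extP σ ⌊(N : ℝ) * x⌋₊ := by positivity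
  have h3 : 0 ≤ (N : ℝ) * exch σ x := by linarith
  exact nonneg_of_mul_nonneg_right h3 hN'

lemma exch_le_one {N : ℕ} (hN : 0 < N) (σ : Equiv.Perm (Fin N)) {x : ℝ} (_hx : 0 ≤ x)
    (hx1 : x ≤ 1) : exch σ x ≤ 1 := by
  have hN' : (0 : ℝ) < N := by exact_mod_cast hN
  by_cases h : ⌊(N : ℝ) * x⌋₊ < N
  · have h1 := extP_lt σ h
    have h1' : ((extP σ ⌊(N : ℝ) * x⌋₊ : ℕ) : ℝ) + 1 ≤ N := by exact_mod_cast h1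
    have h2 := Nat.lt_floor_add_one ((N : ℝ) * x)
    have h3 := exch_mul hN σ x
    have : (N : ℝ) * exch σ x ≤ N * 1 := by linarith
    exact le_of_mul_le_mul_left this hN'
  · unfold exch extP
    rw [dif_neg h]
    simpa using hx1

lemma exch_inv {N : ℕ} (hN : 0 < N) (σ : Equiv.Perm (Fin N)) {x : ℝ} (hx : 0 ≤ x) :
    exch σ.symm (exch σ x) = x := by
  have hN' : (0 : ℝ) < N := by exact_mod_cast hN
  have h1 := exch_mul hN σ.symm (exch σ x)
  rw [exch_floor hN σ hx, extP_inv, exch_mul hN σ x] at h1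
  have : (N : ℝ) * exch σ.symm (exch σ x) = N * x := by linarith
  exact mul_left_cancel₀ hN'.ne' this

lemma exch_measurable {N : ℕ} (σ : Equiv.Perm (Fin N)) : Measurable (exch σ) := by
  have h1 : Measurable (fun i : ℕ => ((extP σ i : ℝ) - (i : ℝ)) / N) := measurable_from_top
  exact measurable_id.add (h1.comp (measurable_floorN N))

lemma exch_le {N : ℕ} (hN : 0 < N) (σ : Equiv.Perm (Fin N)) (A : Set ℝ) (hA : MeasurableSet A) :
    μ01 (exch σ ⁻¹' A) ≤ μ01 A := by
  have hN' : (0 : ℝ) < N := by exact_mod_cast hN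
  let I : ℕ → Set ℝ := fun i => {x | ⌊(N : ℝ) * x⌋₊ = i} ∩ Set.Icc 0 1
  have hI : ∀ i, MeasurableSet (I i) := fun i =>
    (measurable_floorN N (measurableSet_singleton i)).inter measurableSet_Icc
  rw [Measure.restrict_apply (exch_measurable σ hA), Measure.restrict_apply hA]
  have hsub : exch σ ⁻¹' A ∩ Set.Icc 0 1 ⊆ {1} ∪ ⋃ i : Fin N,
      (fun x => x + ((extP σ i : ℝ) - (i : ℕ)) / N) ⁻¹' (A ∩ I (σ i)) := by
    rintro x ⟨hxA, hx⟩
    by_cases hx1 : x = 1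
    · left; exact hx1
    right
    have hlt : ⌊(N : ℝ) * x⌋₊ < N := by
      rw [Nat.floor_lt (mul_nonneg hN'.le hx.1)]
      have := lt_of_le_of_ne hx.2 hx1
      nlinarith
    rw [Set.mem_iUnion]
    refine ⟨⟨_, hlt⟩, hxA, ?_, exch_nonneg hN σ hx.1, exch_le_one hN σ hx.1 hx.2⟩
    have := exch_floor hN σ hx.1
    unfold exch at this
    simp only [Set.mem_ofPred_eq]
    rw [this]
    simp [extP, hlt]
  calc _ ≤ _ := measure_mono hsub
    _ ≤ volume ({1} : Set ℝ) + volume (⋃ i : Fin N,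
      (fun x => x + ((extP σ i : ℝ) - (i : ℕ)) / N) ⁻¹' (A ∩ I (σ i))) := measure_union_le _ _
    _ = volume (⋃ i : Fin N,
      (fun x => x + ((extP σ i : ℝ) - (i : ℕ)) / N) ⁻¹' (A ∩ I (σ i))) := by simp
    _ ≤ ∑ i : Fin N, volume ((fun x => x + ((extP σ i : ℝ) - (i : ℕ)) / N) ⁻¹' (A ∩ I (σ i))) :=
      measure_iUnion_fintype_le _ _
    _ = ∑ i : Fin N, volume (A ∩ I (σ i)) := by
      apply Finset.sum_congr rfl
      intro i _
      exact measure_preimage_add_right _ _ _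
    _ = ∑ i : Fin N, volume (A ∩ I i) := Equiv.sum_comp σ (fun i => volume (A ∩ I i))
    _ = volume (⋃ i : Fin N, A ∩ I i) := by
      rw [measure_iUnion _ (fun i : Fin N => hA.inter (hI i)), tsum_fintype]
      intro i j hij
      rw [Function.onFun, Set.disjoint_left]
      rintro x ⟨_, h1, _⟩ ⟨_, h2, _⟩
      exact hij (Fin.ext (h1.symm.trans h2))
    _ ≤ _ := by
      apply measure_mono
      apply Set.iUnion_subset
      rintro i x ⟨h1, _, h2⟩
      exact ⟨h1, h2⟩

instance : IsProbabilityMeasure μ01 := ⟨by simp⟩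

lemma exch_mp {N : ℕ} (hN : 0 < N) (σ : Equiv.Perm (Fin N)) :
    MeasurePreserving (exch σ) μ01 μ01 := by
  refine ⟨exch_measurable σ, ?_⟩
  have := Measure.isProbabilityMeasure_map (μ := μ01) (exch_measurable σ).aemeasurable
  apply Measure.eq_of_le_of_isProbabilityMeasure
  rw [Measure.le_iff]
  intro A hA
  rw [Measure.map_apply (exch_measurable σ) hA]
  exact exch_le hN σ A hA

lemma exch_inv_mp {N : ℕ} (hN : 0 < N) (σ : Equiv.Perm (Fin N)) :
    IsInvMeasurePreserving (exch σ) :=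
  ⟨fun _ hx => ⟨exch_nonneg hN σ hx.1, exch_le_one hN σ hx.1 hx.2⟩, exch_mp hN σ, exch σ.symm,
    fun _ hx => ⟨exch_nonneg hN _ hx.1, exch_le_one hN _ hx.1 hx.2⟩, exch_mp hN σ.symm,
    fun _ hx => exch_inv hN σ hx.1, fun x hx => by simpa using exch_inv hN σ.symm hx.1⟩

lemma cutDist_le_of {U W : ℝ → ℝ → ℝ} {φ : ℝ → ℝ} (hφ : IsInvMeasurePreserving φ) {B : ℝ}
    (h : cutNorm (fun x y => U x y - W (φ x) (φ y)) ≤ B) : cutDist U W ≤ B := by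
  refine le_trans ?_ h
  unfold cutDist
  refine csInf_le ?_ ⟨φ, hφ, rfl⟩
  refine ⟨0, ?_⟩
  rintro r ⟨φ, -, rfl⟩
  apply Real.sSup_nonneg
  rintro r ⟨S, T, -, -, -, -, rfl⟩
  exact abs_nonneg _

lemma cutDist_le_disc {n k : ℕ} (hn : 0 < n) (hk : 0 < k) (G : SimpleGraph (Fin n))
    (H : SimpleGraph (Fin k)) (σ : Equiv.Perm (Fin (n * k))) (B : ℝ)
    (hB : ∀ S T : Finset (Fin (n * k)), |∑ i ∈ S, ∑ j ∈ T,
      (adjN G ((i : ℕ) / k) ((j : ℕ) / k) - adjN H ((σ i : ℕ) / n) ((σ j : ℕ) / n))| ≤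
        ((n * k : ℕ) : ℝ) ^ 2 * B) :
    cutDist (graphonOf G) (graphonOf H) ≤ B := by
  have hN : 0 < n * k := Nat.mul_pos hn hk
  have hn' : (n : ℝ) ≠ 0 := by exact_mod_cast hn.ne'
  have hk' : (k : ℝ) ≠ 0 := by exact_mod_cast hk.ne'
  apply cutDist_le_of (exch_inv_mp hN σ)
  apply cutNorm_le hN _ (fun a b => adjN G (a / k) (b / k) -
    adjN H (extP σ a / n) (extP σ b / n)) B
  · intro x hx y hy
    rw [graphonOf_eq hn G hx.1 hy.1,
      graphonOf_eq hk H (exch_nonneg hN σ hx.1) (exch_nonneg hN σ hy.1)]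
    have e1 : ∀ z : ℝ, ⌊(n : ℝ) * z⌋₊ = ⌊((n * k : ℕ) : ℝ) * z⌋₊ / k := by
      intro z
      rw [← Nat.floor_div_natCast]
      congr 1
      push_cast
      field_simp
    have e2 : ∀ z : ℝ, ⌊(k : ℝ) * z⌋₊ = ⌊((n * k : ℕ) : ℝ) * z⌋₊ / n := by
      intro z
      rw [← Nat.floor_div_natCast]
      congr 1
      push_cast
      field_simp
    simp only [e1, e2, exch_floor hN σ hx.1, exch_floor hN σ hy.1]
  · intro S T
    have : ∀ i : Fin (n * k), extP σ i = σ i := by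
      intro i; simp [extP]
    simp only [this]
    exact hB S T

lemma adjN_eq {k : ℕ} (H : SimpleGraph (Fin k)) (i j : Fin k) : adjN H i j = adjR H i j := by
  simp [adjN]

lemma adjR_mem {k : ℕ} (H : SimpleGraph (Fin k)) (i j : Fin k) :
    0 ≤ adjR H i j ∧ adjR H i j ≤ 1 := by
  unfold adjR; split_ifs <;> norm_num

lemma sum_fib {α : Type*} {k : ℕ} (S : Finset α) (q : α → Fin k) (g : Fin k → ℝ) :
    ∑ x ∈ S, g (q x) = ∑ i, ((S.filter (fun x => q x = i)).card : ℝ) * g i := by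
  rw [← Finset.sum_fiberwise S q]
  apply Finset.sum_congr rfl
  intro i _
  rw [Finset.sum_congr rfl (g := fun _ => g i), Finset.sum_const, nsmul_eq_mul]
  intro x hx
  rw [(Finset.mem_filter.1 hx).2]

set_option maxHeartbeats 1000000 in
lemma disc {n k : ℕ} (hn : 0 < n) (hk : 4 ≤ k) (G : SimpleGraph (Fin n)) (t : ℕ) (ht : 1 ≤ t) :
    ∃ (H : SimpleGraph (Fin k)) (σ : Equiv.Perm (Fin (n * k))),
      ∀ S T : Finset (Fin (n * k)), |∑ i ∈ S, ∑ j ∈ T,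
      (adjN G ((i : ℕ) / k) ((j : ℕ) / k) - adjN H ((σ i : ℕ) / n) ((σ j : ℕ) / n))| ≤
        ((n * k : ℕ) : ℝ) ^ 2 * (1 / √t + 2 * 4 ^ t / k + 8 / √k) := by
  classical
  have hk0 : 0 < k := by omega
  have hkR : (0 : ℝ) < k := by exact_mod_cast hk0
  have hnR : (0 : ℝ) < n := by exact_mod_cast hn
  have hN : 0 < n * k := Nat.mul_pos hn hk0
  have : Nonempty (Fin (n * k)) := ⟨⟨0, hN⟩⟩
  let gq : Fin (n * k) → Fin n := fun i => ⟨i / k, Nat.div_lt_of_lt_mul (i.2.trans_eq (mul_comm n k))⟩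
  let hq : Fin (n * k) → Fin k := fun i => ⟨i / n, Nat.div_lt_of_lt_mul i.2⟩
  let W : Fin (n * k) → Fin (n * k) → ℝ := fun i j => adjR G (gq i) (gq j)
  have hW : ∀ i j, 0 ≤ W i j ∧ W i j ≤ 1 := fun i j => adjR_mem _ _ _
  have hWs : ∀ i j, W i j = W j i := by
    intro i j; simp only [W, adjR, G.adj_comm]
  obtain ⟨f, hf, hreg⟩ := weak_reg W hW t ht
  let σ : Equiv.Perm (Fin (n * k)) := (Tuple.sort f).symm
  let F : Fin (n * k) → ℕ := f ∘ Tuple.sort f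
  have hF : Monotone F := Tuple.monotone_sort f
  have hFσ : ∀ x, F (σ x) = f x := by intro x; simp [F, σ]
  have hfst : ∀ j : Fin k, n * (j : ℕ) < n * k := fun j => Nat.mul_lt_mul_of_pos_left j.2 hn
  have hlst : ∀ j : Fin k, n * (j : ℕ) + (n - 1) < n * k := fun j => by
    have : n * ((j : ℕ) + 1) ≤ n * k := Nat.mul_le_mul_left n j.2
    rw [mul_add, mul_one] at this
    omega
  let c : Fin k → ℕ := fun j => F ⟨n * j, hfst j⟩
  let c' : Fin k → ℕ := fun j => F ⟨n * j + (n - 1), hlst j⟩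
  let q : Fin (n * k) → Fin k := fun x => hq (σ x)
  have hcf : ∀ x, c (q x) ≤ f x ∧ f x ≤ c' (q x) := by
    intro x
    have h1 := Nat.div_add_mod (σ x : ℕ) n
    have h2 := Nat.mod_lt (σ x : ℕ) hn
    rw [← hFσ x]
    constructor
    · apply hF
      rw [Fin.le_def]
      simp only [q, hq]
      omega
    · apply hF
      rw [Fin.le_def]
      simp only [q, hq]
      omega
  have hcc : ∀ j, c j ≤ c' j := by
    intro j; apply hF; rw [Fin.le_def]; simp
  let Bd : Finset (Fin k) := Finset.univ.filter (fun j => c j < c' j)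
  have hgood : ∀ x, q x ∉ Bd → f x = c (q x) := by
    intro x hx
    simp only [Bd, Finset.mem_filter, Finset.mem_univ, true_and, not_lt] at hx
    have := hcf x
    omega
  have hstrict : ∀ i ∈ Bd, ∀ j, i < j → c i < c j := by
    intro i hi j hij
    simp only [Bd, Finset.mem_filter, Finset.mem_univ, true_and] at hi
    refine hi.trans_le (hF ?_)
    rw [Fin.le_def]
    have : n * ((i : ℕ) + 1) ≤ n * j := Nat.mul_le_mul_left n hij
    simp only
    rw [mul_add, mul_one] at this
    omega
  have hBd : Bd.card ≤ 4 ^ t := by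
    rw [← Finset.card_range (4 ^ t)]
    apply Finset.card_le_card_of_injOn c
    · intro j _
      simp only [Finset.coe_range, Set.mem_Iio]
      exact hf _
    · intro i hi j hj hij
      rcases lt_trichotomy i j with h | h | h
      · exact absurd hij (hstrict i hi j h).ne
      · exact h
      · exact absurd hij (hstrict j hj i h).ne'
  have hfib : ∀ j, (Finset.univ.filter (fun x => q x = j)).card ≤ n := by
    intro j
    refine le_of_le_of_eq ?_ (Finset.card_range n)
    apply Finset.card_le_card_of_injOn (fun x => (σ x : ℕ) % n)
    · intro x _
      simp only [Finset.coe_range, Set.mem_Iio]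
      exact Nat.mod_lt _ hn
    · intro x hx y hy hxy
      simp only [Finset.coe_filter, Finset.mem_univ, true_and, Set.mem_ofPred_eq] at hx hy
      have h1 : (σ x : ℕ) / n = (σ y : ℕ) / n := congrArg Fin.val (hx.trans hy.symm)
      have h2 : (σ x : ℕ) = σ y := by
        rw [← Nat.div_add_mod (σ x : ℕ) n, ← Nat.div_add_mod (σ y : ℕ) n, h1]
        simp only at hxy
        rw [hxy]
      exact σ.injective (Fin.ext h2)
  let X : Finset (Fin (n * k)) := Finset.univ.filter (fun x => q x ∈ Bd)
  have hX : X.card ≤ n * 4 ^ t := by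
    refine (Finset.card_le_mul_card_image_of_maps_to (f := q) (t := Bd) ?_ n ?_).trans
      (Nat.mul_le_mul_left n hBd)
    · intro x hx; exact (Finset.mem_filter.1 hx).2
    · intro j _
      exact (Finset.card_le_card (Finset.filter_subset_filter _ (Finset.subset_univ _))).trans (hfib j)
  let d := avg W f
  have hd : ∀ a b, 0 ≤ d a b ∧ d a b ≤ 1 := avg_mem W hW f
  obtain ⟨H, hH⟩ := rounding hk (fun i j => d (c i) (c j)) (fun i j => avg_symm W hWs f _ _)
    (fun i j => hd _ _)
  refine ⟨H, σ, fun S T => ?_⟩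
  have hsplit : ∑ i ∈ S, ∑ j ∈ T,
      (adjN G ((i : ℕ) / k) ((j : ℕ) / k) - adjN H ((σ i : ℕ) / n) ((σ j : ℕ) / n)) =
      ∑ i ∈ S, ∑ j ∈ T, (W i j - d (f i) (f j)) +
      ∑ i ∈ S, ∑ j ∈ T, (d (f i) (f j) - d (c (q i)) (c (q j))) -
      ∑ i ∈ S, ∑ j ∈ T, (adjR H (q i) (q j) - d (c (q i)) (c (q j))) := by
    rw [← Finset.sum_add_distrib, ← Finset.sum_sub_distrib]
    apply Finset.sum_congr rfl
    intro i _
    rw [← Finset.sum_add_distrib, ← Finset.sum_sub_distrib]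
    apply Finset.sum_congr rfl
    intro j _
    have h1 : adjN G ((i : ℕ) / k) ((j : ℕ) / k) = W i j := adjN_eq G (gq i) (gq j)
    have h2 : adjN H ((σ i : ℕ) / n) ((σ j : ℕ) / n) = adjR H (q i) (q j) := adjN_eq H (q i) (q j)
    rw [h1, h2]; ring
  have b1 := hreg S T
  rw [Fintype.card_fin] at b1
  have b2 : |∑ i ∈ S, ∑ j ∈ T, (d (f i) (f j) - d (c (q i)) (c (q j)))| ≤
      2 * ((n * k : ℕ) : ℝ) * (n * 4 ^ t) := by
    let u : Fin (n * k) → ℝ := fun x => if x ∈ X then 1 else 0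
    have hu0 : ∀ x, 0 ≤ u x := by intro x; simp only [u]; split_ifs <;> norm_num
    have hus : ∑ x, u x ≤ n * 4 ^ t := by
      simp only [u, Finset.sum_ite_mem, Finset.univ_inter, Finset.sum_const, nsmul_eq_mul, mul_one]
      exact_mod_cast hX
    have hpt : ∀ i j, |d (f i) (f j) - d (c (q i)) (c (q j))| ≤ u i + u j := by
      intro i j
      have h1 := hd (f i) (f j)
      have h2 := hd (c (q i)) (c (q j))
      have h3 : |d (f i) (f j) - d (c (q i)) (c (q j))| ≤ 1 := by
        rw [abs_le]; constructor <;> linarith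
      by_cases hi : i ∈ X
      · have : u i = 1 := by simp [u, hi]
        linarith [hu0 j]
      by_cases hj : j ∈ X
      · have : u j = 1 := by simp [u, hj]
        linarith [hu0 i]
      have hi' : q i ∉ Bd := fun h => hi (Finset.mem_filter.2 ⟨Finset.mem_univ _, h⟩)
      have hj' : q j ∉ Bd := fun h => hj (Finset.mem_filter.2 ⟨Finset.mem_univ _, h⟩)
      rw [hgood i hi', hgood j hj', sub_self, abs_zero]
      linarith [hu0 i, hu0 j]
    calc _ ≤ ∑ i ∈ S, |∑ j ∈ T, (d (f i) (f j) - d (c (q i)) (c (q j)))| :=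
          Finset.abs_sum_le_sum_abs _ _
      _ ≤ ∑ i ∈ S, ∑ j ∈ T, |d (f i) (f j) - d (c (q i)) (c (q j))| :=
          Finset.sum_le_sum fun i _ => Finset.abs_sum_le_sum_abs _ _
      _ ≤ ∑ i ∈ S, ∑ j, (u i + u j) := by
          apply Finset.sum_le_sum
          intro i _
          refine (Finset.sum_le_sum fun j _ => hpt i j).trans ?_
          exact Finset.sum_le_univ_sum_of_nonneg (fun j => add_nonneg (hu0 i) (hu0 j))
      _ ≤ ∑ i, ∑ j, (u i + u j) :=
          Finset.sum_le_univ_sum_of_nonneg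
            (fun i => Finset.sum_nonneg fun j _ => add_nonneg (hu0 i) (hu0 j))
      _ = 2 * ((n * k : ℕ) : ℝ) * ∑ x, u x := by
          simp only [Finset.sum_add_distrib, Finset.sum_const, Finset.card_univ, Fintype.card_fin,
            nsmul_eq_mul, ← Finset.mul_sum]
          ring
      _ ≤ _ := by gcongr
  have b3 : |∑ i ∈ S, ∑ j ∈ T, (adjR H (q i) (q j) - d (c (q i)) (c (q j)))| ≤
      n * (n * (8 * (k * √k))) := by
    have h1 : ∑ i ∈ S, ∑ j ∈ T, (adjR H (q i) (q j) - d (c (q i)) (c (q j))) =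
        ∑ i, ((S.filter (fun x => q x = i)).card : ℝ) *
          ∑ j, ((T.filter (fun x => q x = j)).card : ℝ) * (adjR H i j - d (c i) (c j)) := by
      rw [← sum_fib S q (fun i => ∑ j, ((T.filter (fun x => q x = j)).card : ℝ) *
        (adjR H i j - d (c i) (c j)))]
      apply Finset.sum_congr rfl
      intro i _
      exact sum_fib T q (fun j => adjR H (q i) j - d (c (q i)) (c j))
    have hle : ∀ (S : Finset (Fin (n * k))) (i : Fin k),
        0 ≤ ((S.filter (fun x => q x = i)).card : ℝ) ∧
        ((S.filter (fun x => q x = i)).card : ℝ) ≤ n := by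
      intro S i
      refine ⟨Nat.cast_nonneg _, ?_⟩
      exact Nat.cast_le.2 ((Finset.card_le_card
        (Finset.filter_subset_filter _ (Finset.subset_univ _))).trans (hfib i))
    rw [h1]
    exact bil_ext _ _ _ _ _ _ hH (hle S) hnR.le (hle T) hnR.le
  rw [hsplit]
  have e2 : 2 * ((n * k : ℕ) : ℝ) * (n * 4 ^ t) = ((n * k : ℕ) : ℝ) ^ 2 * (2 * 4 ^ t / k) := by
    push_cast; field_simp
  have hsk : 0 < √(k : ℝ) := Real.sqrt_pos.2 hkR
  have hskk : √(k : ℝ) * √(k : ℝ) = k := Real.mul_self_sqrt hkR.le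
  have e3 : (n : ℝ) * (n * (8 * (k * √k))) = ((n * k : ℕ) : ℝ) ^ 2 * (8 / √k) := by
    push_cast
    rw [mul_div_assoc', eq_div_iff hsk.ne']
    linear_combination (8 * (n : ℝ) ^ 2 * k) * hskk
  rw [e2] at b2
  rw [e3] at b3
  have e1 : ((n * k : ℕ) : ℝ) ^ 2 / √t = ((n * k : ℕ) : ℝ) ^ 2 * (1 / √t) := by ring
  rw [e1] at b1
  have := (abs_sub _ _).trans (add_le_add (abs_add_le _ _) le_rfl)|>.trans
    (add_le_add (add_le_add b1 b2) b3)
  refine this.trans (le_of_eq ?_)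
  ring

lemma cutDist_le_one {n k : ℕ} (hn : 0 < n) (hk : 0 < k) (G : SimpleGraph (Fin n))
    (H : SimpleGraph (Fin k)) : cutDist (graphonOf G) (graphonOf H) ≤ 1 := by
  apply cutDist_le_disc hn hk G H (Equiv.refl _)
  intro S T
  have hm : ∀ {m : ℕ} (K : SimpleGraph (Fin m)) (a b : ℕ), 0 ≤ adjN K a b ∧ adjN K a b ≤ 1 := by
    intro m K a b
    unfold adjN
    split_ifs
    · exact adjR_mem _ _ _
    · norm_num
  refine (Finset.abs_sum_le_sum_abs _ _).trans ?_
  have h1 : ∀ i ∈ S, |∑ j ∈ T, (adjN G ((i : ℕ) / k) ((j : ℕ) / k) -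
      adjN H ((Equiv.refl _ i : ℕ) / n) ((Equiv.refl _ j : ℕ) / n))| ≤ ((n * k : ℕ) : ℝ) := by
    intro i _
    refine (Finset.abs_sum_le_sum_abs _ _).trans ?_
    refine (Finset.sum_le_card_nsmul T _ 1 ?_).trans ?_
    · intro j _
      have h1 := hm G ((i : ℕ) / k) ((j : ℕ) / k)
      have h2 := hm H ((Equiv.refl _ i : ℕ) / n) ((Equiv.refl _ j : ℕ) / n)
      rw [abs_le]; constructor <;> linarith
    · have := Finset.card_le_univ T
      rw [Fintype.card_fin] at this
      rw [nsmul_eq_mul, mul_one]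
      exact_mod_cast this
  refine (Finset.sum_le_card_nsmul S _ _ h1).trans ?_
  have := Finset.card_le_univ S
  rw [Fintype.card_fin] at this
  rw [nsmul_eq_mul, mul_one, sq]
  gcongr

lemma id_inv_mp : IsInvMeasurePreserving (id : ℝ → ℝ) :=
  ⟨fun _ h => h, MeasurePreserving.id _, id, fun _ h => h, MeasurePreserving.id _,
    fun _ _ => rfl, fun _ _ => rfl⟩

lemma num_bound (k : ℕ) (hL : 100 < Real.logb 2 k) :
    ∃ t : ℕ, 1 ≤ t ∧ 4 ≤ k ∧
      1 / √(t : ℝ) + 2 * 4 ^ t / k + 8 / √(k : ℝ) ≤ 10 / √(Real.logb 2 k) := by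
  set L := Real.logb 2 k with hLd
  have hk0 : (0 : ℝ) < k := by
    rcases Nat.eq_zero_or_pos k with h | h
    · rw [hLd, h] at hL; norm_num at hL
    · exact_mod_cast h
  have hkL : (2 : ℝ) ^ L = k := Real.rpow_logb (by norm_num) (by norm_num) hk0
  have hsk : 0 < √(k : ℝ) := Real.sqrt_pos.2 hk0
  have hskk : √(k : ℝ) * √(k : ℝ) = k := Real.mul_self_sqrt hk0.le
  have hsL : 0 < √L := Real.sqrt_pos.2 (by linarith)
  have hsLL : √L * √L = L := Real.mul_self_sqrt (by linarith)
  set t := ⌊L / 4⌋₊ with ht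
  have ht1 : (t : ℝ) ≤ L / 4 := Nat.floor_le (by linarith)
  have ht2 : L / 4 < t + 1 := Nat.lt_floor_add_one _
  have h4t : (4 : ℝ) ^ t ≤ √k := by
    have h1 : (4 : ℝ) ^ t = (2 : ℝ) ^ (2 * (t : ℝ)) := by
      rw [Real.rpow_mul (by norm_num), Real.rpow_natCast]; norm_num
    have h2 : √(k : ℝ) = (2 : ℝ) ^ (L / 2) := by
      rw [Real.sqrt_eq_rpow, ← hkL, ← Real.rpow_mul (by norm_num)]; ring_nf
    rw [h1, h2]
    apply Real.rpow_le_rpow_of_exponent_le (by norm_num); linarith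
  have htL : L / 9 ≤ t := by linarith
  have hL2 : 2 * √L ≤ √k := by
    have hLt : L ≤ 9 * t := by linarith
    have hb : (4 * (t : ℝ)) ≤ 4 ^ t := by
      have := one_add_mul_le_pow (show (-2 : ℝ) ≤ 3 by norm_num) (t - 1)
      have ht0 : 1 ≤ t := by
        have : (0 : ℝ) < t := by linarith
        exact_mod_cast this
      have hcast : ((t - 1 : ℕ) : ℝ) = t - 1 := by push_cast [ht0]; ring
      rw [hcast] at this
      have he : (4 : ℝ) ^ t = 4 ^ (t - 1) * 4 := by rw [← pow_succ]; congr 1; omega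
      rw [he]
      norm_num at this
      have ht3 : (1 : ℝ) ≤ t := by exact_mod_cast ht0
      linarith
    have h10 : 10 ≤ √L := by
      apply Real.le_sqrt_of_sq_le; linarith
    nlinarith
  have hk4 : 4 ≤ k := by
    have : (4 : ℝ) ≤ k := by
      have : 20 ≤ √(k : ℝ) := by
        have h10 : 10 ≤ √L := by
          apply Real.le_sqrt_of_sq_le; linarith
        linarith
      nlinarith
    exact_mod_cast this
  have hst : √L / 3 ≤ √(t : ℝ) := by
    apply Real.le_sqrt_of_sq_le
    rw [div_pow, sq, hsLL]; linarith
  refine ⟨t, ?_, hk4, ?_⟩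
  · have : (0 : ℝ) < t := by linarith
    exact_mod_cast this
  have a1 : 1 / √(t : ℝ) ≤ 3 / √L := by
    calc 1 / √(t : ℝ) ≤ 1 / (√L / 3) := by gcongr
      _ = 3 / √L := by field_simp
  have a2 : 2 * 4 ^ t / (k : ℝ) ≤ 2 / √k := by
    rw [div_le_div_iff₀ hk0 hsk]
    nlinarith
  have a3 : 10 / √(k : ℝ) ≤ 5 / √L := by
    rw [div_le_div_iff₀ hsk hsL]; linarith
  have a4 : 2 / √(k : ℝ) + 8 / √k = 10 / √k := by ring
  have a5 : 3 / √L + 5 / √L ≤ 10 / √L := by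
    rw [← add_div]; gcongr; norm_num
  linarith

/-- Every finite simple graph can be approximated in cut distance by a graph on `k` nodes
with error `10/√(log₂ k)`. -/
theorem approx_by_k_node_graph (k : ℕ) (hk : 2 ≤ k) {n : ℕ} (G : SimpleGraph (Fin n)) :
    ∃ H : SimpleGraph (Fin k),
      cutDist (graphonOf G) (graphonOf H) ≤ 10 / Real.sqrt (Real.logb 2 k) := by
  have hk0 : 0 < k := by omega
  rcases Nat.eq_zero_or_pos n with rfl | hn
  · refine ⟨⊥, ?_⟩
    apply cutDist_le_of id_inv_mp
    have : (fun x y => graphonOf G x y - graphonOf (⊥ : SimpleGraph (Fin k)) (id x) (id y)) =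
        fun _ _ => 0 := by
      funext x y
      simp [graphonOf]
    rw [this]
    apply cutNorm_le one_pos _ (fun _ _ => 0)
    · intros; rfl
    · intro S T; simp; positivity
  by_cases hL : 100 < Real.logb 2 k
  · obtain ⟨t, ht, hk4, hb⟩ := num_bound k hL
    obtain ⟨H, σ, hH⟩ := disc hn hk4 G t ht
    exact ⟨H, (cutDist_le_disc hn hk0 G H σ _ hH).trans hb⟩
  · refine ⟨⊥, (cutDist_le_one hn hk0 G ⊥).trans ?_⟩
    have h1 : 0 < Real.logb 2 k := Real.logb_pos (by norm_num) (by exact_mod_cast hk)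
    rw [le_div_iff₀ (Real.sqrt_pos.2 h1), one_mul, Real.sqrt_le_left (by norm_num)]
    linarith
end

section
/- Strong Regularity Lemma: for every sequence (ε_0, ε_1, ε_2, …) of positive real numbers there is a positive integer k_0 such that for every finite simple graph G = (V,E) there exist a simple graph G' on the same vertex set V and a partition P of V into k ≤ k_0 classes such that d_1(G, G') ≤ ε_0 and d_□(G', G'_P) ≤ ε_k. -/
open Finset
open scoped Classical

-- The weight function of a simple graph: 1 on edges, 0 elsewhere.
noncomputable def adjW {V : Type} (G : SimpleGraph V) : V → V → ℝ :=
  fun u v => if G.Adj u v then 1 else 0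

-- The normalized cut distance `d_□` between two edge-weighted graphs on the same
-- finite vertex set `V`:  `(1/|V|²) · max_{S,T ⊆ V} |e_β(S,T) − e_β'(S,T)|`.
noncomputable def cutDistW {V : Type} [Fintype V] (β β' : V → V → ℝ) : ℝ :=
  (⨆ p : Finset V × Finset V, |∑ s ∈ p.1, ∑ t ∈ p.2, (β s t - β' s t)|) /
    ((Fintype.card V : ℝ) ^ 2)

-- The class of `v` under the partition of `V` given by the colouring `c : V → Fin k`.
noncomputable def classOf {V : Type} [Fintype V] {k : ℕ} (c : V → Fin k) (i : Fin k) :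
    Finset V :=
  Finset.univ.filter (fun v => c v = i)

-- The quotient weighted graph `G_P` of `G` by the partition given by `c : V → Fin k`:
-- the weight of the pair `uv` is the edge density between the classes of `u` and `v`.
noncomputable def quotientW {V : Type} [Fintype V] {k : ℕ} (G : SimpleGraph V)
    (c : V → Fin k) : V → V → ℝ :=
  fun u v =>
    (∑ x ∈ classOf c (c u), ∑ y ∈ classOf c (c v), adjW G x y) /
      (((classOf c (c u)).card : ℝ) * ((classOf c (c v)).card : ℝ))

-- The normalized edit distance `d_1(G,G') = |E(G) △ E(G')| / C(n,2)`, computed via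
-- ordered pairs: `|{(u,v) : G.Adj u v ≠ G'.Adj u v}| / (n(n−1))`.
noncomputable def d1dist {V : Type} [Fintype V] (G G' : SimpleGraph V) : ℝ :=
  ((Finset.univ.filter (fun p : V × V => ¬ (G.Adj p.1 p.2 ↔ G'.Adj p.1 p.2))).card : ℝ) /
    ((Fintype.card V : ℝ) * ((Fintype.card V : ℝ) - 1))


noncomputable def avgOn {X β : Type} [Fintype X] (C : X → β) (f : X → ℝ) (x : X) : ℝ :=
  (∑ y with C y = C x, f y) / ((univ.filter (fun y => C y = C x)).card : ℝ)

def MeasFor {X β : Type} (C : X → β) (g : X → ℝ) : Prop := ∀ x y, C x = C y → g x = g y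

def Refines {X β γ : Type} (C' : X → β) (C : X → γ) : Prop := ∀ x y, C' x = C' y → C x = C y

noncomputable def energyOn {X β : Type} [Fintype X] (C : X → β) (f : X → ℝ) : ℝ :=
  ∑ x, (avgOn C f x) ^ 2

set_option linter.unusedSectionVars false

section abstractPart
variable {X β γ : Type} [Fintype X]

lemma avgOn_meas (C : X → β) (f : X → ℝ) : MeasFor C (avgOn C f) := by
  intro x y h
  simp only [avgOn, h]

lemma MeasFor.mono {C' : X → γ} {C : X → β} (h : Refines C' C) {g : X → ℝ} (hg : MeasFor C g) :
    MeasFor C' g := fun x y hxy => hg x y (h x y hxy)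

lemma fiber_card_pos (C : X → β) (x : X) :
    0 < ((univ.filter (fun y => C y = C x)).card : ℝ) := by
  have : 0 < (univ.filter (fun y => C y = C x)).card := Finset.card_pos.2 ⟨x, by simp⟩
  exact_mod_cast this

lemma avgOn_of_meas (C : X → β) (g : X → ℝ) (hg : MeasFor C g) (x : X) : avgOn C g x = g x := by
  have h : ∑ y with C y = C x, g y = ∑ y with C y = C x, g x := by
    apply Finset.sum_congr rfl
    intro y hy
    exact hg y x (by simpa using hy)
  have h0 := (fiber_card_pos C x).ne'
  rw [avgOn, h, Finset.sum_const, nsmul_eq_mul]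
  field_simp

lemma avgOn_orth (C : X → β) (f g : X → ℝ) (hg : MeasFor C g) :
    ∑ x, avgOn C f x * g x = ∑ x, f x * g x := by
  have h1 : ∀ x, avgOn C f x * g x =
      ∑ y, if C y = C x then f y * (g x / ((univ.filter (fun z => C z = C x)).card : ℝ)) else 0 := by
    intro x
    rw [← Finset.sum_filter, ← Finset.sum_mul, avgOn]
    ring
  simp_rw [h1]
  rw [Finset.sum_comm]
  apply Finset.sum_congr rfl
  intro y _
  have h2 : ∀ x, (if C y = C x then f y * (g x / ((univ.filter (fun z => C z = C x)).card : ℝ)) else 0)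
     = if C x = C y then f y * (g x / ((univ.filter (fun z => C z = C x)).card : ℝ)) else 0 := by
    intro x
    by_cases h : C x = C y
    · simp [h]
    · simp [h, Ne.symm h]
  simp_rw [h2]
  rw [← Finset.sum_filter, ← Finset.mul_sum]
  congr 1
  have := avgOn_of_meas C g hg y
  rw [avgOn, Finset.sum_div] at this
  rw [← this]
  apply Finset.sum_congr rfl
  intro x hx
  have hx : C x = C y := by simpa using hx
  rw [hx]

lemma energy_diff {C' : X → γ} {C : X → β} (h : Refines C' C) (f : X → ℝ) :
    ∑ x, (avgOn C' f x - avgOn C f x) ^ 2 = energyOn C' f - energyOn C f := by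
  have e1 := avgOn_orth C' f (avgOn C f) ((avgOn_meas C f).mono h)
  have e2 := avgOn_orth C f (avgOn C f) (avgOn_meas C f)
  have : ∀ x, (avgOn C' f x - avgOn C f x) ^ 2 = avgOn C' f x ^ 2
      - 2 * (avgOn C' f x * avgOn C f x) + avgOn C f x * avgOn C f x := fun x => by ring
  simp_rw [this, Finset.sum_add_distrib, Finset.sum_sub_distrib, ← Finset.mul_sum]
  rw [e1, ← e2]
  unfold energyOn
  simp_rw [sq]
  ring

lemma energy_incr {C' : X → γ} {C : X → β} (h : Refines C' C) (f g : X → ℝ)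
    (hg : MeasFor C' g) (hg1 : ∀ x, |g x| ≤ 1) {δ : ℝ} (hδ : 0 < δ)
    (hbig : δ * (Fintype.card X : ℝ) < |∑ x, g x * (f x - avgOn C f x)|) :
    energyOn C f + δ ^ 2 * (Fintype.card X : ℝ) < energyOn C' f := by
  have e1 := avgOn_orth C' f g hg
  have e2 : ∑ x, g x * (f x - avgOn C f x) = ∑ x, g x * (avgOn C' f x - avgOn C f x) := by
    simp_rw [mul_sub, Finset.sum_sub_distrib]
    congr 1
    rw [← Finset.sum_congr rfl (fun x _ => mul_comm (avgOn C' f x) (g x)), e1]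
    exact Finset.sum_congr rfl (fun x _ => mul_comm _ _)
  rw [e2] at hbig
  have cs := Finset.sum_mul_sq_le_sq_mul_sq univ g (fun x => avgOn C' f x - avgOn C f x)
  rw [energy_diff h] at cs
  have hgs : ∑ x, g x ^ 2 ≤ (Fintype.card X : ℝ) := by
    calc ∑ x, g x ^ 2 ≤ ∑ x : X, (1 : ℝ) := by
          apply Finset.sum_le_sum
          intro x _
          rw [sq_le_one_iff_abs_le_one]; exact hg1 x
      _ = _ := by simp
  have hD : 0 ≤ energyOn C' f - energyOn C f := by
    rw [← energy_diff h]; positivity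
  have hN : (0 : ℝ) ≤ Fintype.card X := by positivity
  rcases hN.eq_or_lt with h0 | hpos
  · have h0' : Fintype.card X = 0 := by exact_mod_cast h0.symm
    have := Fintype.card_eq_zero_iff.1 h0'
    simp at hbig
  have h3 : (δ * (Fintype.card X : ℝ)) ^ 2 < (∑ x, g x * (avgOn C' f x - avgOn C f x)) ^ 2 := by
    rw [← sq_abs (∑ x, g x * (avgOn C' f x - avgOn C f x))]
    exact pow_lt_pow_left₀ hbig (by positivity) (by norm_num)
  have h4 : (δ ^ 2 * (Fintype.card X : ℝ)) * (Fintype.card X : ℝ)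
      < (energyOn C' f - energyOn C f) * (Fintype.card X : ℝ) := by
    nlinarith [mul_le_mul_of_nonneg_right hgs hD]
  have := lt_of_mul_lt_mul_right h4 hpos.le
  linarith

lemma avgOn_mem (C : X → β) (f : X → ℝ) (hf : ∀ x, 0 ≤ f x ∧ f x ≤ 1) (x : X) :
    0 ≤ avgOn C f x ∧ avgOn C f x ≤ 1 := by
  constructor
  · exact div_nonneg (Finset.sum_nonneg fun y _ => (hf y).1) (by positivity)
  · rw [avgOn, div_le_one (fiber_card_pos C x)]
    calc _ ≤ ∑ y with C y = C x, (1 : ℝ) := Finset.sum_le_sum fun y _ => (hf y).2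
      _ = _ := by simp

lemma energy_le (C : X → β) (f : X → ℝ) (hf : ∀ x, 0 ≤ f x ∧ f x ≤ 1) :
    energyOn C f ≤ Fintype.card X := by
  calc _ ≤ ∑ x : X, (1 : ℝ) := by
        apply Finset.sum_le_sum
        intro x _
        have := avgOn_mem C f hf x
        nlinarith
    _ = _ := by simp

/-- The rounding lemma, by the method of conditional expectations. -/
lemma rounding_s5 {E J : Type} [Fintype E] [Fintype J] (w : J → E → ℝ) (hw : ∀ j e, |w j e| ≤ 2)
    (x : E → ℝ) (hx : ∀ e, 0 ≤ x e ∧ x e ≤ 1) (l : ℝ) (hl : 0 < l) (hl2 : l ≤ 1 / 2) :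
    ∃ y : E → ℝ, (∀ e, y e = 0 ∨ y e = 1) ∧
      ∀ j, l * ∑ e, w j e * (y e - x e) ≤ 4 * l ^ 2 * Fintype.card E + Real.log (Fintype.card J) := by
  have key : ∀ s : Finset E, ∃ y : E → ℝ, (∀ e, y e = 0 ∨ y e = 1) ∧
      ∑ j, Real.exp (l * ∑ e ∈ s, w j e * (y e - x e)) ≤
        Fintype.card J * Real.exp (4 * l ^ 2 * s.card) := by
    intro s
    induction s using Finset.induction_on with
    | empty => exact ⟨fun _ => 0, by simp, by simp⟩
    | insert a s ha ih =>
      obtain ⟨y, hy, hs⟩ := ih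
      set A : J → ℝ := fun j => Real.exp (l * ∑ e ∈ s, w j e * (y e - x e)) with hA
      have hApos : ∀ j, 0 < A j := fun j => Real.exp_pos _
      have hval : ∀ t : ℝ, ∑ j, Real.exp (l * ∑ e ∈ insert a s,
          w j e * (Function.update y a t e - x e)) =
          ∑ j, A j * Real.exp (l * (w j a * (t - x a))) := by
        intro t
        apply Finset.sum_congr rfl
        intro j _
        rw [Finset.sum_insert ha, hA, ← Real.exp_add]
        have : ∑ e ∈ s, w j e * (Function.update y a t e - x e) =
            ∑ e ∈ s, w j e * (y e - x e) := by
          apply Finset.sum_congr rfl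
          intro e he
          rw [Function.update_of_ne (by rintro rfl; exact ha he)]
        rw [this, Function.update_self]
        ring_nf
      have hexp : ∀ z : ℝ, |z| ≤ 1 → Real.exp z ≤ 1 + z + z ^ 2 := by
        intro z hz
        have := Real.abs_exp_sub_one_sub_id_le hz
        have := (abs_le.1 this).2
        linarith
      have hstep : ∀ j (t : ℝ), |t - x a| ≤ 1 → Real.exp (l * (w j a * (t - x a))) ≤
          1 + l * (w j a * (t - x a)) + 4 * l ^ 2 := by
        intro j t ht
        have hz : |l * (w j a * (t - x a))| ≤ 2 * l := by
          rw [abs_mul, abs_mul, abs_of_pos hl]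
          have := mul_le_mul (hw j a) ht (abs_nonneg _) (by norm_num)
          nlinarith
        have h1 := hexp _ (hz.trans (by linarith))
        have h2 := pow_le_pow_left₀ (abs_nonneg _) hz 2
        rw [sq_abs] at h2
        nlinarith
      obtain ⟨hx0, hx1⟩ := hx a
      have hmix : x a * (∑ j, A j * Real.exp (l * (w j a * (1 - x a)))) +
          (1 - x a) * (∑ j, A j * Real.exp (l * (w j a * (0 - x a)))) ≤
          (1 + 4 * l ^ 2) * ∑ j, A j := by
        rw [Finset.mul_sum, Finset.mul_sum, Finset.mul_sum, ← Finset.sum_add_distrib]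
        apply Finset.sum_le_sum
        intro j _
        have h1 := mul_le_mul_of_nonneg_left (hstep j 1 (by rw [abs_le]; constructor <;> linarith)) hx0
        have h0 := mul_le_mul_of_nonneg_left (hstep j 0 (by rw [abs_le]; constructor <;> linarith))
          (sub_nonneg.2 hx1)
        have h2 := mul_le_mul_of_nonneg_left (add_le_add h1 h0) (hApos j).le
        nlinarith
      have hlast : (1 + 4 * l ^ 2) * ∑ j, A j ≤
          Fintype.card J * Real.exp (4 * l ^ 2 * (insert a s).card) := by
        rw [Finset.card_insert_of_notMem ha]
        push_cast
        rw [mul_add, Real.exp_add, mul_one]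
        have h1 : 1 + 4 * l ^ 2 ≤ Real.exp (4 * l ^ 2) := by
          have := Real.add_one_le_exp (4 * l ^ 2); linarith
        have h2 : 0 ≤ ∑ j, A j := Finset.sum_nonneg fun j _ => (hApos j).le
        calc _ ≤ Real.exp (4 * l ^ 2) * ∑ j, A j := mul_le_mul_of_nonneg_right h1 h2
          _ ≤ Real.exp (4 * l ^ 2) * (Fintype.card J * Real.exp (4 * l ^ 2 * s.card)) :=
            mul_le_mul_of_nonneg_left hs (Real.exp_pos _).le
          _ = _ := by ring
      have hup : ∀ t : ℝ, (t = 0 ∨ t = 1) → ∀ e, Function.update y a t e = 0 ∨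
          Function.update y a t e = 1 := by
        intro t ht e
        by_cases h : e = a
        · subst h; simpa using ht
        · rw [Function.update_of_ne h]; exact hy e
      by_cases hc : ∑ j, A j * Real.exp (l * (w j a * (1 - x a))) ≤ (1 + 4 * l ^ 2) * ∑ j, A j
      · refine ⟨Function.update y a 1, hup 1 (Or.inr rfl), ?_⟩
        rw [hval]; exact hc.trans hlast
      · refine ⟨Function.update y a 0, hup 0 (Or.inl rfl), ?_⟩
        rw [hval]
        refine le_trans ?_ hlast
        by_contra hc2
        push Not at hc hc2
        rcases hx1.eq_or_lt with h | h
        · rw [h] at hmix hc; linarith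
        · nlinarith [mul_lt_mul_of_pos_left hc2 (sub_pos.2 h), mul_le_mul_of_nonneg_left hc.le hx0]
  obtain ⟨y, hy, h⟩ := key univ
  refine ⟨y, hy, fun j => ?_⟩
  have h1 : Real.exp (l * ∑ e, w j e * (y e - x e)) ≤
      Fintype.card J * Real.exp (4 * l ^ 2 * Fintype.card E) :=
    le_trans (Finset.single_le_sum (f := fun j => Real.exp (l * ∑ e, w j e * (y e - x e)))
      (fun i _ => (Real.exp_pos _).le) (Finset.mem_univ j)) h
  have hJ : (0 : ℝ) < Fintype.card J := by
    have : 0 < Fintype.card J := Fintype.card_pos_iff.2 ⟨j⟩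
    exact_mod_cast this
  have h2 := Real.log_le_log (Real.exp_pos _) h1
  rw [Real.log_exp, Real.log_mul hJ.ne' (Real.exp_pos _).ne', Real.log_exp] at h2
  linarith

end abstractPart

lemma sum_ind {X : Type} [Fintype X] (A : Finset X)
    [inst : ∀ p, Decidable (p ∈ A)] (h : X → ℝ) :
    ∑ p, (if p ∈ A then (1 : ℝ) else 0) * h p = ∑ p ∈ A, h p := by
  simp only [ite_mul, one_mul, zero_mul]
  rw [← Finset.sum_filter]
  congr 1
  ext
  simp

noncomputable def aw {V : Type} (G : SimpleGraph V) (p : V × V) : ℝ := adjW G p.1 p.2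

lemma aw_01 {V : Type} (G : SimpleGraph V) (p : V × V) : aw G p = 0 ∨ aw G p = 1 := by
  unfold aw adjW
  split_ifs <;> simp

lemma aw_mem {V : Type} (G : SimpleGraph V) (p : V × V) : 0 ≤ aw G p ∧ aw G p ≤ 1 := by
  rcases aw_01 G p with h | h <;> rw [h] <;> norm_num

lemma pair_rounding (θ : ℝ) (hθ : 0 < θ) : ∃ N : ℕ, ∀ (V : Type) [Fintype V], N ≤ Fintype.card V →
    ∀ (J : Type) [Fintype J], Fintype.card J ≤ 16 ^ Fintype.card V →
    ∀ (w : J → V × V → ℝ), (∀ j p, |w j p| ≤ 1) → ∀ W : V × V → ℝ, (∀ p, 0 ≤ W p ∧ W p ≤ 1) →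
    (∀ u v, W (u, v) = W (v, u)) →
    ∃ y : V × V → ℝ, (∀ p, y p = 0 ∨ y p = 1) ∧ (∀ u v, y (u, v) = y (v, u)) ∧
      ∀ j, ∑ p, w j p * (y p - W p) ≤ θ * (Fintype.card V : ℝ) ^ 2 := by
  set l : ℝ := min (1 / 2) (θ / 8) with hldef
  have hl : 0 < l := lt_min (by norm_num) (by positivity)
  have hl2 : l ≤ 1 / 2 := min_le_left _ _
  have hl8 : l ≤ θ / 8 := min_le_right _ _
  obtain ⟨N, hN⟩ := exists_nat_ge (32 / (l * θ))
  refine ⟨N, ?_⟩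
  intro V _ hV J _ hJ w hw W hW hsym
  set n : ℝ := (Fintype.card V : ℝ) with hn
  have hnN : 32 / (l * θ) ≤ n := hN.trans (by rw [hn]; exact_mod_cast hV)
  have hfib : ∀ e : Sym2 V, (univ.filter (fun p : V × V => s(p.1, p.2) = e)).card ≤ 2 := by
    intro e
    induction e using Sym2.ind with
    | _ a b =>
      calc _ ≤ ({(a, b), (b, a)} : Finset (V × V)).card := by
            apply Finset.card_le_card
            rintro ⟨u, v⟩ h
            simp only [Finset.mem_filter, Finset.mem_univ, true_and, Sym2.eq_iff] at h
            simp only [Finset.mem_insert, Finset.mem_singleton, Prod.mk.injEq]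
            exact h
        _ ≤ 2 := Finset.card_le_two
  let x : Sym2 V → ℝ := Sym2.lift ⟨fun u v => W (u, v), hsym⟩
  have hx : ∀ e, 0 ≤ x e ∧ x e ≤ 1 := by
    intro e
    induction e using Sym2.ind with
    | _ a b => exact hW (a, b)
  let c : J → Sym2 V → ℝ := fun j e => ∑ p : V × V with s(p.1, p.2) = e, w j p
  have hc : ∀ j e, |c j e| ≤ 2 := by
    intro j e
    calc |c j e| ≤ ∑ p : V × V with s(p.1, p.2) = e, |w j p| := Finset.abs_sum_le_sum_abs _ _
      _ ≤ ∑ p : V × V with s(p.1, p.2) = e, (1 : ℝ) := Finset.sum_le_sum fun p _ => hw j p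
      _ ≤ 2 := by
        rw [Finset.sum_const, nsmul_eq_mul, mul_one]
        exact_mod_cast hfib e
  obtain ⟨y, hy, hyj⟩ := rounding_s5 c hc x hx l hl hl2
  refine ⟨fun p => y s(p.1, p.2), fun p => hy _, fun u v => by simp only [Sym2.eq_swap], ?_⟩
  intro j
  have hE : (Fintype.card (Sym2 V) : ℝ) ≤ n ^ 2 := by
    have : Fintype.card (Sym2 V) ≤ Fintype.card (V × V) :=
      Fintype.card_le_of_surjective (fun p : V × V => s(p.1, p.2)) (by
        intro e
        induction e using Sym2.ind with
        | _ a b => exact ⟨(a, b), rfl⟩)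
    rw [Fintype.card_prod] at this
    have h2 : (Fintype.card (Sym2 V) : ℝ) ≤ (Fintype.card V : ℝ) * (Fintype.card V : ℝ) := by
      exact_mod_cast this
    rw [hn, sq]; exact h2
  have hlog : Real.log (Fintype.card J) ≤ 16 * n := by
    have hJpos : (0 : ℝ) < Fintype.card J := by
      have : 0 < Fintype.card J := Fintype.card_pos_iff.2 ⟨j⟩
      exact_mod_cast this
    have h1 : (Fintype.card J : ℝ) ≤ 16 ^ Fintype.card V := by exact_mod_cast hJ
    have h2 := Real.log_le_log hJpos h1
    rw [Real.log_pow] at h2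
    have h3 := Real.log_le_sub_one_of_pos (show (0 : ℝ) < 16 by norm_num)
    have hn0 : 0 ≤ n := by positivity
    nlinarith
  have hsum : ∑ e, c j e * (y e - x e) = ∑ p : V × V, w j p * (y s(p.1, p.2) - W p) := by
    rw [← Finset.sum_fiberwise univ (fun p : V × V => s(p.1, p.2))]
    apply Finset.sum_congr rfl
    intro e _
    rw [Finset.sum_mul]
    apply Finset.sum_congr rfl
    intro p hp
    have hp : s(p.1, p.2) = e := by simpa using hp
    rw [← hp]
    rfl
  have hfin := hyj j
  rw [hsum] at hfin
  have hn0 : 0 ≤ n := by positivity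
  have h32 : 32 ≤ n * (l * θ) := (div_le_iff₀ (by positivity)).1 hnN
  have : l * ∑ p : V × V, w j p * (y s(p.1, p.2) - W p) ≤ l * (θ * n ^ 2) := by
    refine hfin.trans ?_
    have h1 : 4 * l ^ 2 * (Fintype.card (Sym2 V) : ℝ) ≤ 4 * l ^ 2 * n ^ 2 := by gcongr
    have h2 : 4 * l ^ 2 * n ^ 2 ≤ l * θ / 2 * n ^ 2 := by
      gcongr
      nlinarith
    have h3 : 16 * n ≤ l * θ / 2 * n ^ 2 := by nlinarith
    linarith
  exact le_of_mul_le_mul_left this hl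

lemma graph_rounding (θ : ℝ) (hθ : 0 < θ) : ∃ N : ℕ, ∀ (V : Type) [Fintype V],
    N ≤ Fintype.card V → ∀ (G : SimpleGraph V) (W : V × V → ℝ), (∀ p, 0 ≤ W p ∧ W p ≤ 1) →
    (∀ u v, W (u, v) = W (v, u)) →
    ∃ G' : SimpleGraph V,
      (∀ S T : Finset V, |∑ p ∈ S ×ˢ T, (aw G' p - W p)| ≤ θ * (Fintype.card V : ℝ) ^ 2) ∧
      ∑ p, |aw G' p - aw G p| ≤ ∑ p, |W p - aw G p| + θ * (Fintype.card V : ℝ) ^ 2 := by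
  obtain ⟨N₁, hN₁⟩ := pair_rounding (θ / 2) (by positivity)
  obtain ⟨N₂, hN₂⟩ := exists_nat_ge (2 / θ)
  refine ⟨max (max N₁ N₂) 1, ?_⟩
  intro V _ hV G W hW hsym
  have hV1 : N₁ ≤ Fintype.card V := le_trans (by simp) hV
  have hV2 : N₂ ≤ Fintype.card V := le_trans (by simp) hV
  have hV3 : 1 ≤ Fintype.card V := le_trans (by simp) hV
  have hnbig : (Fintype.card V : ℝ) ≤ θ / 2 * (Fintype.card V : ℝ) ^ 2 := by
    have h1 : 2 / θ ≤ (Fintype.card V : ℝ) := hN₂.trans (by exact_mod_cast hV2)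
    have h2 : 2 ≤ (Fintype.card V : ℝ) * θ := (div_le_iff₀ hθ).1 h1
    have h3 : (0 : ℝ) ≤ (Fintype.card V : ℝ) := by positivity
    nlinarith
  let w : (Finset V × Finset V × Fin 3) → V × V → ℝ := fun j p =>
    if j.2.2 = 2 then 1 - 2 * aw G p else
      (if j.2.2 = 0 then 1 else -1) * (if p ∈ j.1 ×ˢ j.2.1 then 1 else 0)
  have hJ : Fintype.card (Finset V × Finset V × Fin 3) ≤ 16 ^ Fintype.card V := by
    simp only [Fintype.card_prod, Fintype.card_finset, Fintype.card_fin]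
    have h16 : (16 : ℕ) ^ Fintype.card V = 2 ^ Fintype.card V * (2 ^ Fintype.card V * 4 ^ Fintype.card V) := by
      rw [← mul_pow, ← mul_pow]
      norm_num
    rw [h16]
    gcongr
    calc 3 ≤ 4 ^ 1 := by norm_num
      _ ≤ 4 ^ Fintype.card V := Nat.pow_le_pow_right (by norm_num) hV3
  have hw : ∀ j p, |w j p| ≤ 1 := by
    intro j p
    simp only [w]
    split_ifs
    · rcases aw_01 G p with h | h <;> rw [h] <;> norm_num
    all_goals norm_num
  obtain ⟨y, hy, hysym, hyj⟩ := hN₁ V hV1 _ hJ w hw W hW hsym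
  let G' : SimpleGraph V :=
    { Adj := fun u v => u ≠ v ∧ y (u, v) = 1
      symm := ⟨fun u v h => ⟨h.1.symm, by rw [hysym]; exact h.2⟩⟩
      loopless := ⟨fun u h => h.1 rfl⟩ }
  have hG' : ∀ p : V × V, p.1 ≠ p.2 → aw G' p = y p := by
    rintro ⟨u, v⟩ h
    have h : u ≠ v := h
    have hadj : G'.Adj u v ↔ (u ≠ v ∧ y (u, v) = 1) := Iff.rfl
    simp only [aw, adjW, hadj]
    rcases hy (u, v) with h' | h' <;> simp [h', h]
  have hdiag : ∀ (H : SimpleGraph V) (p : V × V), p.1 = p.2 → aw H p = 0 := by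
    rintro H ⟨u, v⟩ h
    have h : u = v := h
    subst h
    simp [aw, adjW]
  have hy01 : ∀ p, 0 ≤ y p ∧ y p ≤ 1 := by
    intro p
    rcases hy p with h | h <;> rw [h] <;> norm_num
  have hdsum : ∑ p : V × V, (if p.1 = p.2 then (1 : ℝ) else 0) = Fintype.card V := by
    rw [Fintype.sum_prod_type]
    simp
  refine ⟨G', ?_, ?_⟩
  · intro S T
    have e0 := hyj (S, T, 0)
    have e1 := hyj (S, T, 1)
    have f0 : ∑ p, w (S, T, 0) p * (y p - W p) = ∑ p ∈ S ×ˢ T, (y p - W p) := by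
      rw [← sum_ind (S ×ˢ T)]
      exact Finset.sum_congr rfl fun p _ => by simp [w]
    have f1 : ∑ p, w (S, T, 1) p * (y p - W p) = - ∑ p ∈ S ×ˢ T, (y p - W p) := by
      rw [← sum_ind (S ×ˢ T), ← Finset.sum_neg_distrib]
      exact Finset.sum_congr rfl fun p _ => by
        simp [w]
        split_ifs <;> ring
    rw [f0] at e0
    rw [f1] at e1
    have e2 : |∑ p ∈ S ×ˢ T, (y p - W p)| ≤ θ / 2 * (Fintype.card V : ℝ) ^ 2 := by
      rw [abs_le]; constructor <;> linarith
    have e3 : |∑ p ∈ S ×ˢ T, (aw G' p - y p)| ≤ Fintype.card V := by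
      calc _ ≤ ∑ p ∈ S ×ˢ T, |aw G' p - y p| := Finset.abs_sum_le_sum_abs _ _
        _ ≤ ∑ p, |aw G' p - y p| :=
          Finset.sum_le_sum_of_subset_of_nonneg (Finset.subset_univ _) (fun _ _ _ => abs_nonneg _)
        _ ≤ ∑ p : V × V, (if p.1 = p.2 then (1 : ℝ) else 0) := by
          apply Finset.sum_le_sum
          intro p _
          split_ifs with h
          · rw [hdiag _ _ h, abs_le]
            have := hy01 p
            constructor <;> linarith
          · rw [hG' p h]; simp
        _ = _ := hdsum
    have e4 : ∑ p ∈ S ×ˢ T, (aw G' p - W p) =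
        ∑ p ∈ S ×ˢ T, (aw G' p - y p) + ∑ p ∈ S ×ˢ T, (y p - W p) := by
      rw [← Finset.sum_add_distrib]
      exact Finset.sum_congr rfl fun p _ => by ring
    rw [e4]
    refine (abs_add_le _ _).trans ?_
    linarith
  · have e := hyj (∅, ∅, 2)
    have h1 : ∀ p, |aw G' p - aw G p| ≤ |W p - aw G p| + w (∅, ∅, 2) p * (y p - W p) := by
      intro p
      have hwp : w (∅, ∅, 2) p = 1 - 2 * aw G p := by simp [w]
      have habs : |W p - aw G p| + w (∅, ∅, 2) p * (y p - W p) = |y p - aw G p| := by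
        rw [hwp]
        have h1 := hW p
        have h2 := hy01 p
        rcases aw_01 G p with h | h
        · rw [h, sub_zero, sub_zero, abs_of_nonneg h1.1, abs_of_nonneg h2.1]; ring
        · rw [h, abs_of_nonpos (by linarith), abs_of_nonpos (by linarith)]; ring
      rw [habs]
      by_cases h : p.1 = p.2
      · rw [hdiag _ _ h, hdiag _ _ h]; simp
      · rw [hG' p h]
    calc _ ≤ ∑ p, (|W p - aw G p| + w (∅, ∅, 2) p * (y p - W p)) := Finset.sum_le_sum fun p _ => h1 p
      _ = ∑ p, |W p - aw G p| + ∑ p, w (∅, ∅, 2) p * (y p - W p) := Finset.sum_add_distrib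
      _ ≤ _ := by
        have : 0 ≤ (Fintype.card V : ℝ) := by positivity
        linarith

def cp {V : Type} (c : V → ℕ) (p : V × V) : ℕ × ℕ := (c p.1, c p.2)

def GoodCol {V : Type} [Fintype V] (c : V → ℕ) (δ : ℝ) (f : V × V → ℝ) : Prop :=
  ∀ q : V × V → ℝ, MeasFor (cp c) q → (∀ p, |q p| ≤ 1) → ∀ S T : Finset V,
    |∑ p ∈ S ×ˢ T, q p * (f p - avgOn (cp c) f p)| ≤ δ * (Fintype.card (V × V) : ℝ)

lemma Refines.cp {V : Type} {c' c : V → ℕ} (h : Refines c' c) : Refines (cp c') (cp c) := by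
  rintro ⟨a, b⟩ ⟨a', b'⟩ hh
  simp only [_root_.cp, Prod.mk.injEq] at hh ⊢
  exact ⟨h _ _ hh.1, h _ _ hh.2⟩

lemma bad_refine {V : Type} [Fintype V] (c : V → ℕ) (δ : ℝ) (hδ : 0 < δ) (f : V × V → ℝ)
    (hbad : ¬ GoodCol c δ f) (k : ℕ) (hk : ∀ v, c v < k) :
    ∃ c' : V → ℕ, (∀ v, c' v < 4 * k) ∧ Refines c' c ∧
      energyOn (cp c) f + δ ^ 2 * (Fintype.card (V × V) : ℝ) < energyOn (cp c') f := by
  unfold GoodCol at hbad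
  push Not at hbad
  obtain ⟨q, hq, hq1, S, T, hST⟩ := hbad
  let c' : V → ℕ := fun v => 4 * c v + (if v ∈ S then 2 else 0) + (if v ∈ T then 1 else 0)
  have hc' : ∀ u v, c' u = c' v → c u = c v ∧ (u ∈ S ↔ v ∈ S) ∧ (u ∈ T ↔ v ∈ T) := by
    intro u v h
    simp only [c'] at h
    by_cases h1 : u ∈ S <;> by_cases h2 : v ∈ S <;> by_cases h3 : u ∈ T <;> by_cases h4 : v ∈ T <;>
      simp only [h1, h2, h3, h4, if_true, if_false] at h <;> simp only [h1, h2, h3, h4] <;> simp <;>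
      omega
  have href : Refines c' c := fun u v h => (hc' u v h).1
  refine ⟨c', ?_, href, ?_⟩
  · intro v
    have := hk v
    simp only [c']
    split_ifs <;> omega
  · refine energy_incr href.cp f (fun p => (if p ∈ S ×ˢ T then (1 : ℝ) else 0) * q p) ?_ ?_ hδ ?_
    · rintro ⟨a, b⟩ ⟨a', b'⟩ hh
      have hqq := (hq.mono href.cp) _ _ hh
      simp only [cp, Prod.mk.injEq] at hh
      have h1 := hc' _ _ hh.1
      have h2 := hc' _ _ hh.2
      simp only [hqq, Finset.mem_product, h1.2.1, h2.2.2]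
    · intro p
      split_ifs
      · simpa using hq1 p
      · simp
    · simp only [mul_assoc]
      rw [sum_ind]
      exact hST

lemma weak_reg_s5 (δ : ℝ) (hδ : 0 < δ) : ∀ (m k : ℕ), ∃ K : ℕ, ∀ (V : Type) [Fintype V]
    (f : V × V → ℝ), (∀ p, 0 ≤ f p ∧ f p ≤ 1) → ∀ c : V → ℕ, (∀ v, c v < k) →
    (Fintype.card (V × V) : ℝ) * (1 - m * δ ^ 2) ≤ energyOn (cp c) f →
    ∃ c' : V → ℕ, (∀ v, c' v < K) ∧ Refines c' c ∧ GoodCol c' δ f := by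
  intro m
  induction m with
  | zero =>
    intro k
    refine ⟨k, ?_⟩
    intro V _ f hf c hc hE
    refine ⟨c, hc, fun _ _ h => h, ?_⟩
    by_contra hbad
    obtain ⟨c', _, _, h⟩ := bad_refine c δ hδ f hbad k hc
    have := energy_le (cp c') f hf
    have h0 : 0 ≤ δ ^ 2 * (Fintype.card (V × V) : ℝ) := by positivity
    simp only [Nat.cast_zero, zero_mul, sub_zero, mul_one] at hE
    linarith
  | succ m ih =>
    intro k
    obtain ⟨K, hK⟩ := ih (4 * k)
    refine ⟨max K k, ?_⟩
    intro V _ f hf c hc hE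
    by_cases hg : GoodCol c δ f
    · exact ⟨c, fun v => (hc v).trans_le (le_max_right _ _), fun _ _ h => h, hg⟩
    obtain ⟨c', h1, h2, h3⟩ := bad_refine c δ hδ f hg k hc
    obtain ⟨c'', g1, g2, g3⟩ := hK V f hf c' h1 (by
      push_cast at hE
      nlinarith)
    exact ⟨c'', fun v => (g1 v).trans_le (le_max_left _ _), fun _ _ h => h2 _ _ (g2 _ _ h), g3⟩

lemma weak_reg' (δ : ℝ) (hδ : 0 < δ) (k : ℕ) : ∃ K : ℕ, ∀ (V : Type) [Fintype V]
    (f : V × V → ℝ), (∀ p, 0 ≤ f p ∧ f p ≤ 1) → ∀ c : V → ℕ, (∀ v, c v < k) →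
    ∃ c' : V → ℕ, (∀ v, c' v < K) ∧ Refines c' c ∧ GoodCol c' δ f := by
  obtain ⟨m, hm⟩ := exists_nat_ge (1 / δ ^ 2)
  obtain ⟨K, hK⟩ := weak_reg_s5 δ hδ m k
  refine ⟨K, ?_⟩
  intro V _ f hf c hc
  refine hK V f hf c hc ?_
  have h1 : 1 ≤ m * δ ^ 2 := (div_le_iff₀ (by positivity)).1 hm
  have h2 : 0 ≤ energyOn (cp c) f := Finset.sum_nonneg fun _ _ => sq_nonneg _
  have h3 : (0 : ℝ) ≤ Fintype.card (V × V) := by positivity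
  nlinarith

lemma strong_step (δ : ℕ → ℝ) (hδ : ∀ k, 0 < δ k) (η : ℝ) (hη : 0 < η) : ∀ (m k : ℕ), ∃ M : ℕ,
    ∀ (V : Type) [Fintype V]
    (f : V × V → ℝ), (∀ p, 0 ≤ f p ∧ f p ≤ 1) → ∀ c : V → ℕ, (∀ v, c v < k) →
    (Fintype.card (V × V) : ℝ) * (1 - m * η) ≤ energyOn (cp c) f →
    ∃ (j : ℕ) (c₁ c₂ : V → ℕ), j ≤ M ∧ (∀ v, c₁ v < j) ∧ Refines c₂ c₁ ∧ GoodCol c₂ (δ j) f ∧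
      energyOn (cp c₂) f - energyOn (cp c₁) f ≤ η * (Fintype.card (V × V) : ℝ) := by
  intro m
  induction m with
  | zero =>
    intro k
    obtain ⟨K, hK⟩ := weak_reg' (δ k) (hδ k) k
    refine ⟨k, ?_⟩
    intro V _ f hf c hc hE
    obtain ⟨c', h1, h2, h3⟩ := hK V f hf c hc
    refine ⟨k, c, c', le_rfl, hc, h2, h3, ?_⟩
    have := energy_le (cp c') f hf
    have h0 : 0 ≤ η * (Fintype.card (V × V) : ℝ) := by positivity
    simp only [Nat.cast_zero, zero_mul, sub_zero, mul_one] at hE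
    linarith
  | succ m ih =>
    intro k
    obtain ⟨K, hK⟩ := weak_reg' (δ k) (hδ k) k
    obtain ⟨M, hM⟩ := ih K
    refine ⟨max M k, ?_⟩
    intro V _ f hf c hc hE
    obtain ⟨c', h1, h2, h3⟩ := hK V f hf c hc
    by_cases hs : energyOn (cp c') f - energyOn (cp c) f ≤ η * (Fintype.card (V × V) : ℝ)
    · exact ⟨k, c, c', le_max_right _ _, hc, h2, h3, hs⟩
    push Not at hs
    obtain ⟨j, c₁, c₂, g1, g⟩ := hM V f hf c' h1 (by
      push_cast at hE
      nlinarith)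
    exact ⟨j, c₁, c₂, g1.trans (le_max_left _ _), g⟩

lemma strong_pair (δ : ℕ → ℝ) (hδ : ∀ k, 0 < δ k) (η : ℝ) (hη : 0 < η) : ∃ M : ℕ,
    ∀ (V : Type) [Fintype V] (f : V × V → ℝ), (∀ p, 0 ≤ f p ∧ f p ≤ 1) →
    ∃ (j : ℕ) (c₁ c₂ : V → ℕ), j ≤ M ∧ (∀ v, c₁ v < j) ∧ Refines c₂ c₁ ∧ GoodCol c₂ (δ j) f ∧
      energyOn (cp c₂) f - energyOn (cp c₁) f ≤ η * (Fintype.card (V × V) : ℝ) := by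
  obtain ⟨m, hm⟩ := exists_nat_ge (1 / η)
  obtain ⟨M, hM⟩ := strong_step δ hδ η hη m 1
  refine ⟨M, ?_⟩
  intro V _ f hf
  refine hM V f hf (fun _ => 0) (fun _ => by norm_num) ?_
  have h1 : 1 ≤ m * η := (div_le_iff₀ (by positivity)).1 hm
  have h2 : 0 ≤ energyOn (cp (fun _ : V => 0)) f := Finset.sum_nonneg fun _ _ => sq_nonneg _
  have h3 : (0 : ℝ) ≤ Fintype.card (V × V) := by positivity
  nlinarith

lemma cp_fiber {V : Type} [Fintype V] (c : V → ℕ) (i j : ℕ)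
    [DecidablePred (fun p : V × V => cp c p = (i, j))] :
    (univ.filter (fun p : V × V => cp c p = (i, j))) =
      (univ.filter (fun v => c v = i)) ×ˢ (univ.filter (fun v => c v = j)) := by
  ext ⟨a, b⟩
  simp [cp]

lemma avg_cp {V : Type} [Fintype V] (c : V → ℕ) (f : V × V → ℝ) (u v : V) :
    avgOn (cp c) f (u, v) =
      (∑ x with c x = c u, ∑ y with c y = c v, f (x, y)) /
        (((univ.filter (fun x => c x = c u)).card : ℝ) *
          ((univ.filter (fun x => c x = c v)).card : ℝ)) := by
  have h : cp c (u, v) = (c u, c v) := rfl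
  unfold avgOn
  rw [h, cp_fiber, Finset.sum_product, Finset.card_product]
  push_cast
  rfl

lemma avg_symm_s5 {V : Type} [Fintype V] (c : V → ℕ) (f : V × V → ℝ)
    (hf : ∀ u v, f (u, v) = f (v, u)) (u v : V) :
    avgOn (cp c) f (u, v) = avgOn (cp c) f (v, u) := by
  rw [avg_cp, avg_cp, Finset.sum_comm, mul_comm]
  simp_rw [hf]

lemma quotient_avg {V : Type} [Fintype V] (G : SimpleGraph V) (c : V → ℕ) (k : ℕ) (d : V → Fin k)
    (h : ∀ u v, d u = d v ↔ c u = c v) (u v : V) :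
    quotientW G d u v = avgOn (cp c) (aw G) (u, v) := by
  rw [avg_cp]
  unfold quotientW classOf
  simp only [h]
  rfl

lemma compress {V : Type} [Fintype V] (c : V → ℕ) (k : ℕ) (hc : ∀ v, c v < k) :
    ∃ k' ≤ k, ∃ d : V → Fin k', Function.Surjective d ∧ ∀ u v, d u = d v ↔ c u = c v := by
  refine ⟨(univ.image c).card, ?_, fun v => (univ.image c).equivFin ⟨c v, by simp⟩, ?_, ?_⟩
  · calc _ ≤ (Finset.range k).card := Finset.card_le_card (by
          intro x hx
          simp only [Finset.mem_image, Finset.mem_univ, true_and] at hx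
          obtain ⟨v, rfl⟩ := hx
          simpa using hc v)
      _ = k := Finset.card_range k
  · intro i
    obtain ⟨⟨x, hx⟩, rfl⟩ := (univ.image c).equivFin.surjective i
    simp only [Finset.mem_image, Finset.mem_univ, true_and] at hx
    obtain ⟨v, rfl⟩ := hx
    exact ⟨v, rfl⟩
  · intro u v
    simp

lemma cut_avg {V : Type} [Fintype V] (c : V → ℕ) (k : ℕ) (hc : ∀ v, c v < k) (h : V × V → ℝ)
    (B : ℝ) (hB : ∀ S T : Finset V, |∑ p ∈ S ×ˢ T, h p| ≤ B) (S T : Finset V) :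
    |∑ p ∈ S ×ˢ T, avgOn (cp c) h p| ≤ (k : ℝ) ^ 2 * B := by
  have hB0 : 0 ≤ B := le_trans (abs_nonneg _) (hB ∅ ∅)
  let sg : V × V → ℝ := fun p => if 0 ≤ avgOn (cp c) h p then 1 else -1
  have hsg : MeasFor (cp c) sg := by
    intro x y hxy
    simp only [sg, avgOn_meas (cp c) h x y hxy]
  have hsg1 : ∀ p, |sg p| = 1 := by
    intro p
    simp only [sg]
    split_ifs <;> simp
  calc _ ≤ ∑ p ∈ S ×ˢ T, |avgOn (cp c) h p| := Finset.abs_sum_le_sum_abs _ _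
    _ ≤ ∑ p, |avgOn (cp c) h p| :=
      Finset.sum_le_sum_of_subset_of_nonneg (Finset.subset_univ _) (fun _ _ _ => abs_nonneg _)
    _ = ∑ p, avgOn (cp c) h p * sg p := by
      apply Finset.sum_congr rfl
      intro p _
      simp only [sg]
      split_ifs with h0
      · rw [abs_of_nonneg h0, mul_one]
      · rw [abs_of_neg (not_le.1 h0)]; ring
    _ = ∑ p, h p * sg p := avgOn_orth _ _ _ hsg
    _ = ∑ ij ∈ Finset.range k ×ˢ Finset.range k, ∑ p with cp c p = ij, h p * sg p := by
      rw [Finset.sum_fiberwise_of_maps_to]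
      intro p _
      simp [cp, hc]
    _ ≤ ∑ ij ∈ Finset.range k ×ˢ Finset.range k, B := by
      apply Finset.sum_le_sum
      rintro ⟨i, j⟩ _
      rcases (univ.filter (fun p : V × V => cp c p = (i, j))).eq_empty_or_nonempty with he | ⟨p₀, hp₀⟩
      · rw [he]; simpa using hB0
      · have hp₀ : cp c p₀ = (i, j) := by simpa using hp₀
        have e : ∑ p with cp c p = (i, j), h p * sg p =
            (∑ p with cp c p = (i, j), h p) * sg p₀ := by
          rw [Finset.sum_mul]
          apply Finset.sum_congr rfl
          intro p hp
          have hp : cp c p = (i, j) := by simpa using hp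
          rw [hsg p p₀ (hp.trans hp₀.symm)]
        rw [e, cp_fiber]
        refine (le_abs_self _).trans ?_
        rw [abs_mul, hsg1, mul_one]
        exact hB _ _
    _ = _ := by
      rw [Finset.sum_const, Finset.card_product, Finset.card_range, nsmul_eq_mul]
      push_cast
      ring

lemma coef (a b : ℝ) : ∃ q r s : ℝ, 0 ≤ a → a ≤ 1 → 0 ≤ b → b ≤ 1 →
    |q| ≤ 1 ∧ r + s * b = |a - b| ∧
    ∀ f : ℝ, 0 ≤ f → f ≤ 1 → 0 ≤ a + q * (f - b) ∧ a + q * (f - b) ≤ 1 ∧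
      |a + q * (f - b) - f| = r + s * f := by
  by_cases hab : a ≤ b
  · refine ⟨a / b, 0, 1 - a / b, ?_⟩
    intro ha ha1 hb hb1
    have hqb : a / b * b = a := by
      rcases hb.eq_or_lt with h | h
      · have : a = 0 := by linarith
        rw [this, ← h]; simp
      · exact div_mul_cancel₀ a h.ne'
    have hq0 : 0 ≤ a / b := div_nonneg ha hb
    have hq1 : a / b ≤ 1 := div_le_one_of_le₀ hab hb
    generalize a / b = q at *
    refine ⟨by rw [abs_of_nonneg hq0]; exact hq1, ?_, ?_⟩
    · rw [abs_of_nonpos (by linarith)]; linarith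
    · intro f hf0 hf1
      have e : a + q * (f - b) = q * f := by rw [mul_sub, hqb]; ring
      rw [e]
      refine ⟨mul_nonneg hq0 hf0, mul_le_one₀ hq1 hf0 hf1, ?_⟩
      rw [abs_of_nonpos (by nlinarith)]; ring
  · push Not at hab
    refine ⟨(1 - a) / (1 - b), 1 - (1 - a) / (1 - b), -(1 - (1 - a) / (1 - b)), ?_⟩
    intro ha ha1 hb hb1
    have h1b : 0 < 1 - b := by linarith
    have hqb : (1 - a) / (1 - b) * (1 - b) = 1 - a := div_mul_cancel₀ _ h1b.ne'
    have hq0 : 0 ≤ (1 - a) / (1 - b) := div_nonneg (by linarith) h1b.le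
    have hq1 : (1 - a) / (1 - b) ≤ 1 := div_le_one_of_le₀ (by linarith) h1b.le
    generalize (1 - a) / (1 - b) = q at *
    refine ⟨by rw [abs_of_nonneg hq0]; exact hq1, ?_, ?_⟩
    · rw [abs_of_pos (by linarith)]; linarith
    · intro f hf0 hf1
      have e : a + q * (f - b) = 1 - q * (1 - f) := by linarith
      rw [e]
      have h1 : 0 ≤ 1 - f := by linarith
      have h2 : q * (1 - f) ≤ 1 := mul_le_one₀ hq1 h1 (by linarith)
      have h3 : 0 ≤ q * (1 - f) := mul_nonneg hq0 h1
      refine ⟨by linarith, by linarith, ?_⟩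
      rw [abs_of_nonneg (by nlinarith)]; ring

lemma lower_pos (ε : ℕ → ℝ) (hε : ∀ i, 0 < ε i) (k : ℕ) :
    ∃ e : ℝ, 0 < e ∧ ∀ j ≤ k, e ≤ ε j := by
  induction k with
  | zero => exact ⟨ε 0, hε 0, fun j hj => by rw [Nat.le_zero.1 hj]⟩
  | succ k ih =>
    obtain ⟨e, he, h⟩ := ih
    refine ⟨min e (ε (k + 1)), lt_min he (hε _), fun j hj => ?_⟩
    rcases Nat.le_succ_iff.1 hj with h1 | h1
    · exact (min_le_left _ _).trans (h j h1)
    · rw [h1]; exact min_le_right _ _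

lemma d1_le {V : Type} [Fintype V] (G G' : SimpleGraph V) (e : ℝ) (he : 0 ≤ e)
    (hn : 2 ≤ Fintype.card V)
    (h : ∑ p, |aw G' p - aw G p| ≤ e / 2 * (Fintype.card V : ℝ) ^ 2) : d1dist G G' ≤ e := by
  have hn' : (2 : ℝ) ≤ Fintype.card V := by exact_mod_cast hn
  have hcard : ((Finset.univ.filter
      (fun p : V × V => ¬ (G.Adj p.1 p.2 ↔ G'.Adj p.1 p.2))).card : ℝ) =
      ∑ p, |aw G' p - aw G p| := by
    rw [Finset.card_filter]
    push_cast
    apply Finset.sum_congr rfl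
    intro p _
    unfold aw adjW
    by_cases h1 : G.Adj p.1 p.2 <;> by_cases h2 : G'.Adj p.1 p.2 <;> simp [h1, h2]
  unfold d1dist
  rw [hcard, div_le_iff₀ (by nlinarith)]
  refine h.trans ?_
  have : 0 ≤ e * ((Fintype.card V : ℝ) * ((Fintype.card V : ℝ) - 2)) :=
    mul_nonneg he (mul_nonneg (by linarith) (by linarith))
  nlinarith

lemma cut_le {V : Type} [Fintype V] (β β' : V → V → ℝ) (e : ℝ) (hn : 2 ≤ Fintype.card V)
    (h : ∀ S T : Finset V, |∑ p ∈ S ×ˢ T, (β p.1 p.2 - β' p.1 p.2)| ≤ e * (Fintype.card V : ℝ) ^ 2) :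
    cutDistW β β' ≤ e := by
  have hn' : (2 : ℝ) ≤ Fintype.card V := by exact_mod_cast hn
  unfold cutDistW
  rw [div_le_iff₀ (by positivity)]
  apply ciSup_le
  rintro ⟨S, T⟩
  have := h S T
  rw [Finset.sum_product] at this
  exact this

lemma small_case {V : Type} [Fintype V] (G : SimpleGraph V) :
    cutDistW (adjW G) (quotientW G (Fintype.equivFin V)) = 0 := by
  have h : quotientW G (Fintype.equivFin V) = adjW G := by
    funext u v
    have hcl : ∀ u, classOf (Fintype.equivFin V) (Fintype.equivFin V u) = {u} := by
      intro u
      ext x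
      simp [classOf]
    unfold quotientW
    rw [hcl, hcl]
    simp
  rw [h]
  simp [cutDistW]

/-- Strong Regularity Lemma. -/
theorem strong_regularity_lemma (ε : ℕ → ℝ) (hε : ∀ i, 0 < ε i) :
    ∃ k₀ : ℕ, 0 < k₀ ∧
      ∀ (V : Type) [Fintype V] (G : SimpleGraph V),
        ∃ (G' : SimpleGraph V) (k : ℕ) (c : V → Fin k),
          k ≤ k₀ ∧ Function.Surjective c ∧
          d1dist G G' ≤ ε 0 ∧
          cutDistW (adjW G') (quotientW G' c) ≤ ε k := by
  have hε0 := hε 0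
  choose e he0 he using lower_pos ε hε
  let δ : ℕ → ℝ := fun k => e k / (2 * ((k : ℝ) ^ 2 + 1))
  have hδ : ∀ k, 0 < δ k := fun k => div_pos (he0 k) (by positivity)
  obtain ⟨M, hM⟩ := strong_pair δ hδ ((ε 0 / 4) ^ 2) (by positivity)
  obtain ⟨θ₀, hθ₀, hθδ⟩ := lower_pos δ hδ M
  obtain ⟨N, hN⟩ := graph_rounding (min θ₀ (ε 0 / 4)) (lt_min hθ₀ (by positivity))
  refine ⟨M + N + 2, by omega, ?_⟩
  intro V _ G
  by_cases hsmall : Fintype.card V < N + 2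
  · refine ⟨G, Fintype.card V, Fintype.equivFin V, by omega, (Fintype.equivFin V).surjective, ?_, ?_⟩
    · simpa [d1dist] using hε0.le
    · rw [small_case]; exact (hε _).le
  push Not at hsmall
  have hn2 : 2 ≤ Fintype.card V := by omega
  have hcardV : (Fintype.card (V × V) : ℝ) = (Fintype.card V : ℝ) ^ 2 := by
    rw [Fintype.card_prod]; push_cast; ring
  set n2 : ℝ := (Fintype.card V : ℝ) ^ 2 with hn2def
  have hn2pos : 0 ≤ n2 := by positivity
  have hf := aw_mem G
  have hfs : ∀ u v, aw G (u, v) = aw G (v, u) := by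
    intro u v
    simp only [aw, adjW, G.adj_comm]
  obtain ⟨k, c₁, c₂, hkM, hc₁, href, hgood, hen⟩ := hM V (aw G) hf
  choose Q R S hco using coef
  set a : V × V → ℝ := avgOn (cp c₁) (aw G) with ha
  set b : V × V → ℝ := avgOn (cp c₂) (aw G) with hb
  have ha01 := avgOn_mem (cp c₁) (aw G) hf
  have hb01 := avgOn_mem (cp c₂) (aw G) hf
  have hco' : ∀ p, _ := fun p => hco (a p) (b p) (ha01 p).1 (ha01 p).2 (hb01 p).1 (hb01 p).2
  have hma : MeasFor (cp c₂) a := (avgOn_meas (cp c₁) (aw G)).mono href.cp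
  have hmb : MeasFor (cp c₂) b := avgOn_meas (cp c₂) (aw G)
  have hmeas : ∀ F : ℝ → ℝ → ℝ, MeasFor (cp c₂) (fun p => F (a p) (b p)) := by
    intro F x y hxy
    simp only [hma x y hxy, hmb x y hxy]
  let W : V × V → ℝ := fun p => a p + Q (a p) (b p) * (aw G p - b p)
  have hW : ∀ p, 0 ≤ W p ∧ W p ≤ 1 := fun p =>
    ⟨((hco' p).2.2 _ (hf p).1 (hf p).2).1, ((hco' p).2.2 _ (hf p).1 (hf p).2).2.1⟩
  have hWs : ∀ u v, W (u, v) = W (v, u) := by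
    intro u v
    have h1 : a (u, v) = a (v, u) := avg_symm_s5 c₁ _ hfs u v
    have h2 : b (u, v) = b (v, u) := avg_symm_s5 c₂ _ hfs u v
    simp only [W, h1, h2, hfs u v]
  obtain ⟨G', hcut, hedit⟩ := hN V (by omega) G W hW hWs
  obtain ⟨k', hk', d, hd, hdc⟩ := compress c₁ k hc₁
  refine ⟨G', k', d, by omega, hd, ?_, ?_⟩
  · apply d1_le G G' (ε 0) hε0.le hn2
    have hWf : ∑ p, |W p - aw G p| = ∑ p, |a p - b p| := by
      have h1 : ∀ p, |W p - aw G p| = R (a p) (b p) + aw G p * S (a p) (b p) := by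
        intro p
        rw [mul_comm]
        exact ((hco' p).2.2 _ (hf p).1 (hf p).2).2.2
      have h2 : ∀ p, |a p - b p| = R (a p) (b p) + b p * S (a p) (b p) := by
        intro p
        rw [mul_comm]
        exact (hco' p).2.1.symm
      simp_rw [h1, h2, Finset.sum_add_distrib]
      rw [hb, avgOn_orth (cp c₂) (aw G) (fun p => S (a p) (b p)) (hmeas S)]
    have hL1 : ∑ p, |a p - b p| ≤ ε 0 / 4 * n2 := by
      have cs := Finset.sum_mul_sq_le_sq_mul_sq univ (fun _ : V × V => (1 : ℝ)) (fun p => |a p - b p|)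
      have hd2 : ∑ p, |a p - b p| ^ 2 ≤ (ε 0 / 4) ^ 2 * n2 := by
        rw [← energy_diff href.cp, hcardV] at hen
        refine le_trans (le_of_eq ?_) hen
        apply Finset.sum_congr rfl
        intro p _
        rw [sq_abs]; ring
      simp only [one_mul, one_pow, Finset.sum_const, Finset.card_univ, nsmul_eq_mul, mul_one,
        hcardV] at cs
      refine (pow_le_pow_iff_left₀ (Finset.sum_nonneg fun _ _ => abs_nonneg _) (by positivity)
        (two_ne_zero)).1 ?_
      calc _ ≤ _ := cs
        _ ≤ n2 * ((ε 0 / 4) ^ 2 * n2) := mul_le_mul_of_nonneg_left hd2 hn2pos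
        _ = _ := by ring
    have hθ' : min θ₀ (ε 0 / 4) * n2 ≤ ε 0 / 4 * n2 :=
      mul_le_mul_of_nonneg_right (min_le_right _ _) hn2pos
    rw [hWf] at hedit
    linarith
  · refine le_trans ?_ (he k k' hk')
    apply cut_le _ _ _ hn2
    have hθ' : min θ₀ (ε 0 / 4) * n2 ≤ δ k * n2 :=
      mul_le_mul_of_nonneg_right ((min_le_left _ _).trans (hθδ k hkM)) hn2pos
    have hB : ∀ A B : Finset V, |∑ p ∈ A ×ˢ B, (aw G' p - a p)| ≤ 2 * δ k * n2 := by
      intro A B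
      have h1 := hcut A B
      have h2 := hgood (fun p => Q (a p) (b p)) (hmeas Q) (fun p => (hco' p).1) A B
      rw [hcardV] at h2
      have h3 : ∑ p ∈ A ×ˢ B, (aw G' p - a p) = ∑ p ∈ A ×ˢ B, (aw G' p - W p) +
          ∑ p ∈ A ×ˢ B, Q (a p) (b p) * (aw G p - avgOn (cp c₂) (aw G) p) := by
        rw [← Finset.sum_add_distrib]
        apply Finset.sum_congr rfl
        intro p _
        simp only [W, hb]
        ring
      rw [h3]
      refine (abs_add_le _ _).trans ?_
      linarith
    intro A B
    have h1 := hB A B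
    have h2 := cut_avg c₁ k hc₁ (fun p => aw G' p - a p) _ hB A B
    have havg : ∀ p, avgOn (cp c₁) (fun p => aw G' p - a p) p = avgOn (cp c₁) (aw G') p - a p := by
      intro p
      have h := avgOn_of_meas (cp c₁) a (avgOn_meas (cp c₁) (aw G)) p
      rw [← h]
      unfold avgOn
      rw [Finset.sum_sub_distrib, sub_div]
    have h3 : ∑ p ∈ A ×ˢ B, (adjW G' p.1 p.2 - quotientW G' d p.1 p.2) =
        ∑ p ∈ A ×ˢ B, (aw G' p - a p) -
          ∑ p ∈ A ×ˢ B, avgOn (cp c₁) (fun p => aw G' p - a p) p := by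
      rw [← Finset.sum_sub_distrib]
      apply Finset.sum_congr rfl
      intro p _
      rw [quotient_avg G' c₁ k' d hdc, havg]
      simp only [aw]
      ring
    rw [h3]
    refine (abs_sub _ _).trans ?_
    have h4 : δ k * (2 * ((k : ℝ) ^ 2 + 1)) = e k := div_mul_cancel₀ _ (by positivity)
    calc _ ≤ 2 * δ k * n2 + (k : ℝ) ^ 2 * (2 * δ k * n2) := add_le_add h1 h2
      _ = e k * n2 := by rw [← h4]; ring
end
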